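/- arXiv:1509.07489 — 6 statements merged into one kernel-verified Lean document; each statement's English description precedes it below -/
import Mathlib

section
/- Let n ≥ 1 be odd, n₁ = (n+1)/2, n₀ = (n−1)/2. Let k ∈ K, and write k·a(ϖ^{n₁}) = b·k₂ for some upper-triangular b ∈ GL₂(F) and k₂ ∈ K (Iwasawa decomposition); let c be the lower-left entry of k₂ and set l = min(v(c), n) (with l = n if c = 0). Then: (1) l ≥ n₁ if and only if k ∈ N(𝔬)·K^0(𝔭); and (2) l ≤ n₀ if and only if k ∈ w·K^0(𝔭). (In particular the conditions l ≥ n₁ and l ≤ n₀ do not depend on the chosen Iwasawa decomposition.) -/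
open Matrix

section

variable {F : Type*} [Field F]

/-- `x ∈ 𝔬`, the ring of integers of the discretely valued field `(F, v)`. -/
def InO (v : F → ℤ) (x : F) : Prop := x = 0 ∨ 0 ≤ v x

/-- `x ∈ 𝔭^r`. -/
def InP (v : F → ℤ) (r : ℕ) (x : F) : Prop := x = 0 ∨ (r : ℤ) ≤ v x

/-- `k ∈ K = GL₂(𝔬)`: integral entries and unit determinant. -/
def InK (v : F → ℤ) (k : Matrix (Fin 2) (Fin 2) F) : Prop :=
  (∀ i j : Fin 2, InO v (k i j)) ∧ k.det ≠ 0 ∧ v k.det = 0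

/-- `k ∈ K^0(𝔭^r)`: in `K` with upper-right entry in `𝔭^r`. -/
def InK0upper (v : F → ℤ) (r : ℕ) (k : Matrix (Fin 2) (Fin 2) F) : Prop :=
  InK v k ∧ InP v r (k 0 1)

def aMat (y : F) : Matrix (Fin 2) (Fin 2) F := !![y, 0; 0, 1]

def nMat (x : F) : Matrix (Fin 2) (Fin 2) F := !![1, x; 0, 1]

def wMat : Matrix (Fin 2) (Fin 2) F := !![0, 1; -1, 0]

open scoped Classical in
/-- The invariant `l = min(v(c), n)`, with `l = n` when `c = 0`. -/
noncomputable def lInv (v : F → ℤ) (n : ℕ) (c : F) : ℤ :=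
  if c = 0 then (n : ℤ) else min (v c) (n : ℤ)

end

/-!
Extend `v` by `v 0 = ⊤`. Let `k ∈ K` have bottom row `(γ, δ)` and compare bottom rows in
`k * a(y) = b * k₂`: `γ * y = β * c` and `δ = β * d`, where `(c, d)` is the bottom row of `k₂`.
Bottom rows of elements of `K` are primitive, so `v β = min (v γ + v y) (v δ)`, and primitivity of
`(γ, δ)` turns this into `min (v c) (v y) + min (v δ) (v y) = v y`. Hence, if `0 < v y < ⊤`,
`v y ≤ v c` exactly when `δ` is a unit. Finally, `N(𝔬) K⁰(𝔭)` and `w K⁰(𝔭)` are the parts of `K`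
where `δ` is, respectively is not, a unit.
-/

section Valuation

variable {R Γ : Type*} [LinearOrderedAddCommMonoidWithTop Γ]

section CommRing

variable [CommRing R] (w : AddValuation R Γ)

lemma min_bottomRow_le_det {A : Matrix (Fin 2) (Fin 2) R} (hA : ∀ j, 0 ≤ w (A 0 j)) :
    min (w (A 1 0)) (w (A 1 1)) ≤ w A.det := by
  rw [det_fin_two]
  apply w.map_le_sub <;> rw [w.map_mul]
  · exact (min_le_right _ _).trans (le_add_of_nonneg_left (hA 0))
  · exact (min_le_left _ _).trans (le_add_of_nonneg_left (hA 1))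

lemma min_bottomRow_eq_zero {A : Matrix (Fin 2) (Fin 2) R} (hA : ∀ i j, 0 ≤ w (A i j))
    (hdet : w A.det = 0) : min (w (A 1 0)) (w (A 1 1)) = 0 :=
  le_antisymm (hdet ▸ min_bottomRow_le_det w (hA 0)) (le_min (hA 1 0) (hA 1 1))

end CommRing

section Ring

variable [Ring R] (w : AddValuation R Γ)

lemma min_add_min_eq_of_primitive {γ δ β c d y : R}
    (hγδ : min (w γ) (w δ) = 0) (hcd : min (w c) (w d) = 0) (hy : 0 ≤ w y)
    (hc : γ * y = β * c) (hd : δ = β * d) :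
    min (w c) (w y) + min (w δ) (w y) = w y := by
  have hc' : w γ + w y = w β + w c := by rw [← w.map_mul, hc, w.map_mul]
  have hβ : min (w γ + w y) (w δ) = w β := by
    rw [hc', hd, w.map_mul, min_add_add_left, hcd, add_zero]
  have hγ : 0 ≤ w γ := hγδ ▸ min_le_left _ _
  have hδ : 0 ≤ w δ := hγδ ▸ min_le_right _ _
  rcases min_choice (w γ) (w δ) with h | h <;> rw [hγδ] at h
  · rw [← h, zero_add] at hc' hβ
    have hcy : w c ≤ w y := hc' ▸ le_add_of_nonneg_left (hβ ▸ le_min hy hδ)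
    rw [min_eq_left hcy, min_comm, hβ, add_comm, hc']
  · rw [← h, min_eq_right (add_nonneg hγ hy)] at hβ
    rw [← hβ, zero_add] at hc'
    have hyc : w y ≤ w c := hc' ▸ le_add_of_nonneg_left hγ
    rw [min_eq_right hyc, ← h, min_eq_left hy, add_zero]

lemma le_iff_eq_zero_of_primitive {γ δ β c d y : R}
    (hγδ : min (w γ) (w δ) = 0) (hcd : min (w c) (w d) = 0) (hy : 0 < w y) (hy' : w y ≠ ⊤)
    (hc : γ * y = β * c) (hd : δ = β * d) :
    w y ≤ w c ↔ w δ = 0 := by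
  have hsum := min_add_min_eq_of_primitive w hγδ hcd hy.le hc hd
  constructor
  · intro hyc
    rw [min_eq_right hyc] at hsum
    have hmin : min (w δ) (w y) = 0 :=
      (add_right_inj_of_ne_top hy').mp (hsum.trans (add_zero _).symm)
    exact ((min_choice _ _).resolve_right (hmin ▸ hy.ne)).symm.trans hmin
  · intro hδ
    rw [hδ, min_eq_left hy.le, add_zero] at hsum
    exact min_eq_right_iff.mp hsum

end Ring

end Valuation

section Matrices

variable {F : Type*} [Field F]

lemma nMat_mul_nMat_neg (x : F) : nMat x * nMat (-x) = 1 := by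
  simp [nMat, one_fin_two]

lemma wMat_mul_transpose : (wMat : Matrix (Fin 2) (Fin 2) F) * wMatᵀ = 1 := by
  ext i j
  fin_cases i <;> fin_cases j <;> simp [wMat, mul_apply]

lemma InK.transpose {v : F → ℤ} {k : Matrix (Fin 2) (Fin 2) F} (hk : InK v k) : InK v kᵀ :=
  ⟨fun i j ↦ hk.1 j i, by simpa only [det_transpose] using hk.2⟩

end Matrices

/-- `v` is an additive valuation on the nonzero elements of `F`. Its value at `0` is arbitrary, as
in `InO`, `InP` and `lInv`; `IsIntValuation.toAddValuation` resets it to `⊤`. -/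
structure IsIntValuation {F : Type*} [Field F] (v : F → ℤ) : Prop where
  map_mul : ∀ x y : F, x ≠ 0 → y ≠ 0 → v (x * y) = v x + v y
  map_add : ∀ x y : F, x ≠ 0 → y ≠ 0 → x + y ≠ 0 → min (v x) (v y) ≤ v (x + y)

namespace IsIntValuation

variable {F : Type*} [Field F] {v : F → ℤ} (hv : IsIntValuation v)

include hv in
lemma map_one : v 1 = 0 := by
  simpa using hv.map_mul 1 1 one_ne_zero one_ne_zero

open scoped Classical in
/-- The Mathlib valuation, with value `⊤` at `0`, that agrees with `v` on nonzero elements. -/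
noncomputable def toAddValuation : AddValuation F (WithTop ℤ) :=
  .of (fun x ↦ if x = 0 then ⊤ else (v x : WithTop ℤ)) (if_pos rfl)
    (by simp [hv.map_one])
    (fun x y ↦ by
      by_cases hx : x = 0
      · simp [hx]
      by_cases hy : y = 0
      · simp [hy]
      by_cases hxy : x + y = 0
      · simp [hxy]
      simpa only [hx, hy, hxy, if_false, ← WithTop.coe_min, WithTop.coe_le_coe]
        using hv.map_add x y hx hy hxy)
    (fun x y ↦ by
      by_cases hx : x = 0
      · simp [hx]
      by_cases hy : y = 0
      · simp [hy]
      simp [hx, hy, hv.map_mul x y hx hy])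

lemma toAddValuation_apply_of_ne_zero {x : F} (hx : x ≠ 0) :
    hv.toAddValuation x = (v x : WithTop ℤ) :=
  if_neg hx

include hv in
lemma map_pow {x : F} (hx : x ≠ 0) (m : ℕ) : v (x ^ m) = m * v x := by
  have h := hv.toAddValuation.map_pow x m
  rw [hv.toAddValuation_apply_of_ne_zero hx,
    hv.toAddValuation_apply_of_ne_zero (pow_ne_zero m hx)] at h
  rw [← nsmul_eq_mul]
  exact_mod_cast h

lemma inO_iff {x : F} : InO v x ↔ 0 ≤ hv.toAddValuation x := by
  by_cases hx : x = 0
  · simp [InO, hx]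
  · rw [hv.toAddValuation_apply_of_ne_zero hx, InO, or_iff_right hx, WithTop.coe_nonneg]

lemma inP_one_iff {x : F} : InP v 1 x ↔ 0 < hv.toAddValuation x := by
  by_cases hx : x = 0
  · simp [InP, hx]
  · rw [hv.toAddValuation_apply_of_ne_zero hx, InP, or_iff_right hx]
    norm_cast

lemma coe_lInv (n : ℕ) (c : F) :
    (lInv v n c : WithTop ℤ) = min (hv.toAddValuation c) ((n : ℤ) : WithTop ℤ) := by
  by_cases hc : c = 0
  · simp [lInv, hc]
  · rw [lInv, if_neg hc, hv.toAddValuation_apply_of_ne_zero hc, WithTop.coe_min]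

lemma le_lInv_iff {m n : ℕ} (hmn : m ≤ n) (c : F) :
    (m : ℤ) ≤ lInv v n c ↔ ((m : ℤ) : WithTop ℤ) ≤ hv.toAddValuation c := by
  rw [← WithTop.coe_le_coe, hv.coe_lInv, le_min_iff, and_iff_left]
  exact_mod_cast hmn

lemma inK_iff {k : Matrix (Fin 2) (Fin 2) F} :
    InK v k ↔ (∀ i j, 0 ≤ hv.toAddValuation (k i j)) ∧ hv.toAddValuation k.det = 0 := by
  simp only [InK, hv.inO_iff]
  refine and_congr_right' ?_
  by_cases hdet : k.det = 0
  · simp [hdet]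
  · simp [hdet, hv.toAddValuation_apply_of_ne_zero hdet]

include hv in
lemma inK_mul {k k' : Matrix (Fin 2) (Fin 2) F} (hk : InK v k) (hk' : InK v k') :
    InK v (k * k') := by
  rw [hv.inK_iff] at hk hk' ⊢
  refine ⟨fun i j ↦ ?_, ?_⟩
  · rw [mul_apply]
    refine hv.toAddValuation.map_le_sum fun l _ ↦ ?_
    rw [AddValuation.map_mul]
    exact add_nonneg (hk.1 i l) (hk'.1 l j)
  · rw [det_mul, AddValuation.map_mul, hk.2, hk'.2, add_zero]

include hv in
lemma inK_nMat {x : F} (hx : InO v x) : InK v (nMat x) := by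
  rw [hv.inO_iff] at hx
  rw [hv.inK_iff]
  refine ⟨fun i j ↦ ?_, by simp [nMat]⟩
  fin_cases i <;> fin_cases j <;> simp [nMat, hx]

include hv in
lemma inK_wMat : InK v wMat := by
  rw [hv.inK_iff]
  refine ⟨fun i j ↦ ?_, by simp [wMat]⟩
  fin_cases i <;> fin_cases j <;> simp [wMat]

lemma min_bottomRow_of_inK {k : Matrix (Fin 2) (Fin 2) F} (hk : InK v k) :
    min (hv.toAddValuation (k 1 0)) (hv.toAddValuation (k 1 1)) = 0 :=
  min_bottomRow_eq_zero _ (hv.inK_iff.mp hk).1 (hv.inK_iff.mp hk).2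

lemma min_rightCol_of_inK {k : Matrix (Fin 2) (Fin 2) F} (hk : InK v k) :
    min (hv.toAddValuation (k 0 1)) (hv.toAddValuation (k 1 1)) = 0 :=
  hv.min_bottomRow_of_inK hk.transpose

lemma exists_eq_nMat_mul_iff {k : Matrix (Fin 2) (Fin 2) F} (hk : InK v k) :
    (∃ (x : F) (u : Matrix (Fin 2) (Fin 2) F), InO v x ∧ InK0upper v 1 u ∧ k = nMat x * u) ↔
      hv.toAddValuation (k 1 1) = 0 := by
  constructor
  · rintro ⟨x, u, -, ⟨hu, hu01⟩, rfl⟩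
    have hmin := hv.min_rightCol_of_inK hu
    have hu11 := (min_choice _ _).resolve_left (hmin ▸ (hv.inP_one_iff.mp hu01).ne)
    simpa [nMat, mul_apply] using hu11.symm.trans hmin
  · intro hunit
    have h11 : k 1 1 ≠ 0 := by
      rw [← hv.toAddValuation.ne_top_iff, hunit]
      exact WithTop.zero_ne_top
    obtain ⟨x, hx11⟩ : ∃ x, x * k 1 1 = k 0 1 := ⟨_, div_mul_cancel₀ _ h11⟩
    have hxO : 0 ≤ hv.toAddValuation x := by
      have h01 := hv.inO_iff.mp (hk.1 0 1)
      rwa [← hx11, AddValuation.map_mul, hunit, add_zero] at h01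
    refine ⟨x, nMat (-x) * k, hv.inO_iff.mpr hxO, ⟨hv.inK_mul (hv.inK_nMat ?_) hk, Or.inl ?_⟩, ?_⟩
    · rwa [hv.inO_iff, AddValuation.map_neg]
    · simp [nMat, mul_apply, hx11]
    · rw [← Matrix.mul_assoc, nMat_mul_nMat_neg, Matrix.one_mul]

lemma exists_eq_wMat_mul_iff {k : Matrix (Fin 2) (Fin 2) F} (hk : InK v k) :
    (∃ u : Matrix (Fin 2) (Fin 2) F, InK0upper v 1 u ∧ k = wMat * u) ↔
      0 < hv.toAddValuation (k 1 1) := by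
  constructor
  · rintro ⟨u, ⟨-, hu01⟩, rfl⟩
    simpa [wMat, mul_apply] using hv.inP_one_iff.mp hu01
  · intro hpos
    refine ⟨wMatᵀ * k, ⟨hv.inK_mul hv.inK_wMat.transpose hk, hv.inP_one_iff.mpr ?_⟩, ?_⟩
    · simpa [wMat, mul_apply] using hpos
    · rw [← Matrix.mul_assoc, wMat_mul_transpose, Matrix.one_mul]

lemma le_lInv_iff_of_mul_aMat_eq {y : F} (hy : y ≠ 0) {m n : ℕ} (hym : v y = m) (hm : 0 < m)
    (hmn : m ≤ n) {k b k₂ : Matrix (Fin 2) (Fin 2) F} (hk : InK v k) (hk₂ : InK v k₂)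
    (hb : b 1 0 = 0) (h : k * aMat y = b * k₂) :
    (m : ℤ) ≤ lInv v n (k₂ 1 0) ↔ hv.toAddValuation (k 1 1) = 0 := by
  have hwy : hv.toAddValuation y = ((m : ℤ) : WithTop ℤ) := by
    rw [hv.toAddValuation_apply_of_ne_zero hy, hym]
  have hc : k 1 0 * y = b 1 1 * k₂ 1 0 := by
    simpa [aMat, mul_apply, hb] using congr_fun₂ h 1 0
  have hd : k 1 1 = b 1 1 * k₂ 1 1 := by
    simpa [aMat, mul_apply, hb] using congr_fun₂ h 1 1
  rw [hv.le_lInv_iff hmn, ← hwy]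
  refine le_iff_eq_zero_of_primitive _ (hv.min_bottomRow_of_inK hk) (hv.min_bottomRow_of_inK hk₂)
    ?_ (hv.toAddValuation.ne_top_iff.mpr hy) hc hd
  rw [hwy]
  exact_mod_cast hm

end IsIntValuation

theorem stmt_4_general {F : Type*} [Field F] {v : F → ℤ} (hv : IsIntValuation v)
    {y : F} (hy : y ≠ 0) {n n₁ n₀ : ℕ} (hyv : v y = n₁) (hn₁ : n₁ = n₀ + 1) (hn : n₁ ≤ n)
    {k b k₂ : Matrix (Fin 2) (Fin 2) F} (hk : InK v k) (hb : b 1 0 = 0) (hk₂ : InK v k₂)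
    (hIwasawa : k * aMat y = b * k₂) :
    ((n₁ : ℤ) ≤ lInv v n (k₂ 1 0) ↔
      ∃ (x : F) (u : Matrix (Fin 2) (Fin 2) F),
        InO v x ∧ InK0upper v 1 u ∧ k = nMat x * u) ∧
    (lInv v n (k₂ 1 0) ≤ (n₀ : ℤ) ↔
      ∃ u : Matrix (Fin 2) (Fin 2) F, InK0upper v 1 u ∧ k = wMat * u) := by
  have hunit := hv.le_lInv_iff_of_mul_aMat_eq hy hyv (by omega) hn hk hk₂ hb hIwasawa
  have hnonneg : 0 ≤ hv.toAddValuation (k 1 1) := (hv.inK_iff.mp hk).1 1 1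
  have hle : lInv v n (k₂ 1 0) ≤ (n₀ : ℤ) ↔ ¬ (n₁ : ℤ) ≤ lInv v n (k₂ 1 0) := by omega
  rw [hv.exists_eq_nMat_mul_iff hk, hv.exists_eq_wMat_mul_iff hk, hle, hunit]
  exact ⟨Iff.rfl, hnonneg.lt_iff_ne'.symm⟩

/-- Lemma (support of matrix invariants, odd conductor): for `k ∈ K`,
`l(k·a(ϖ^{n₁})) ≥ n₁ ↔ k ∈ N(𝔬)K^0(𝔭)` and `l(k·a(ϖ^{n₁})) ≤ n₀ ↔ k ∈ wK^0(𝔭)`. -/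
theorem stmt_4 {F : Type*} [Field F] [CharZero F] (v : F → ℤ)
    (hmul : ∀ x y : F, x ≠ 0 → y ≠ 0 → v (x * y) = v x + v y)
    (hadd : ∀ x y : F, x ≠ 0 → y ≠ 0 → x + y ≠ 0 → min (v x) (v y) ≤ v (x + y))
    (ϖ : F) (hϖ0 : ϖ ≠ 0) (hϖ : v ϖ = 1)
    (n n₁ n₀ : ℕ) (hn : 1 ≤ n) (hodd : Odd n) (hn₁ : n₁ = (n + 1) / 2) (hn₀ : n₀ = (n - 1) / 2)
    (k : Matrix (Fin 2) (Fin 2) F) (hk : InK v k)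
    (b k₂ : Matrix (Fin 2) (Fin 2) F)
    (hb : b 1 0 = 0) (hbinv : b.det ≠ 0) (hk₂ : InK v k₂)
    (hIwasawa : k * aMat (ϖ ^ n₁) = b * k₂) :
    ((n₁ : ℤ) ≤ lInv v n (k₂ 1 0) ↔
      ∃ (x : F) (u : Matrix (Fin 2) (Fin 2) F),
        InO v x ∧ InK0upper v 1 u ∧ k = nMat x * u) ∧
    (lInv v n (k₂ 1 0) ≤ (n₀ : ℤ) ↔
      ∃ u : Matrix (Fin 2) (Fin 2) F, InK0upper v 1 u ∧ k = wMat * u) := by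
  have hv : IsIntValuation v := ⟨hmul, hadd⟩
  have hϖn₁ : v (ϖ ^ n₁) = n₁ := by rw [hv.map_pow hϖ0, hϖ, mul_one]
  obtain ⟨m, rfl⟩ := hodd
  exact stmt_4_general hv (pow_ne_zero _ hϖ0) hϖn₁ (by omega) (by omega) hk hb hk₂ hIwasawa
end

section
/- Let n ≥ 0 and n₁ = ⌈n/2⌉. Let k ∈ K and write k·a(ϖ^{n₁}) = b·k₂ with b ∈ GL₂(F) upper triangular with diagonal entries d₁, d₂, and k₂ ∈ K with lower-left entry c. Set l = min(v(c), n) (with l = n if c = 0) and t = v(d₁) − v(d₂) − 2l. Then t = min(n₁ − 2l, −n₁); equivalently, v(d₁) − v(d₂) = min(n₁, 2l − n₁). -/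
open Matrix

/-!
Read `k · a(y) = b · k₂` as `a(y) · k₂⁻¹ = k⁻¹ · b` and compare first columns. On the right it is
`d₁` times a column of an element of `GL₂(𝔬)`, whose entries have minimal valuation `0`, so the
minimal valuation of its entries is `v d₁`. On the left it is, up to a unit, `(y d, -c)` with
`(c, d)` the bottom row of `k₂`; since `min (v c) (v d) = 0`, the minimum is `min (v c) (v y)`.
Hence `v d₁ = min (v c) (v y)`, and `v d₁ + v d₂ = v y` by taking determinants.
-/

theorem min_add_eq_min_of_min_eq_zero {Γ₀ : Type*} [AddCommMonoid Γ₀] [LinearOrder Γ₀]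
    [IsOrderedAddMonoid Γ₀] {γ δ η : Γ₀} (hη : 0 ≤ η) (h : min γ δ = 0) :
    min γ (η + δ) = min γ η := by
  have hδ : 0 ≤ δ := h ▸ min_le_right γ δ
  rcases min_choice γ δ with hγδ | hγδ
  · have hγ : γ = 0 := hγδ.symm.trans h
    rw [hγ, min_eq_left (add_nonneg hη hδ), min_eq_left hη]
  · rw [hγδ.symm.trans h, add_zero]

theorem det_smul_mul_adjugate_eq_of_mul_eq_mul {R ι : Type*} [CommRing R] [Fintype ι]
    [DecidableEq ι] {k a b k₂ : Matrix ι ι R} (h : k * a = b * k₂) :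
    k.det • (a * k₂.adjugate) = k₂.det • (k.adjugate * b) :=
  calc k.det • (a * k₂.adjugate) = k.adjugate * (k * a) * k₂.adjugate := by
        rw [← mul_assoc k.adjugate, adjugate_mul, smul_mul, one_mul, smul_mul]
    _ = k₂.det • (k.adjugate * b) := by
        rw [h, mul_assoc, mul_assoc b, mul_adjugate, Matrix.mul_smul, mul_one, Matrix.mul_smul]

section AddValuation

theorem le_map_det_of_forall_le_row {R Γ₀ ι : Type*} [CommRing R]
    [LinearOrderedAddCommMonoidWithTop Γ₀] [Fintype ι] [DecidableEq ι] (w : AddValuation R Γ₀)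
    {M : Matrix ι ι R} (hM : ∀ i j, 0 ≤ w (M i j)) {i : ι} {γ : Γ₀} (hγ : ∀ j, γ ≤ w (M i j)) :
    γ ≤ w M.det := by
  rw [det_apply']
  refine w.map_le_sum fun σ _ => ?_
  have hsign : w ((Equiv.Perm.sign σ : ℤ) : R) = 0 := by
    rcases Int.units_eq_one_or (Equiv.Perm.sign σ) with h | h <;> simp [h]
  have hrest : 0 ≤ w (∏ j ∈ Finset.univ.erase (σ.symm i), M (σ j) j) :=
    Finset.prod_induction _ (0 ≤ w ·)
      (fun x y hx hy => (w.map_mul x y).symm ▸ add_nonneg hx hy) w.map_one.ge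
      fun j _ => hM (σ j) j
  rw [w.map_mul, hsign, zero_add, ← Finset.mul_prod_erase _ _ (Finset.mem_univ (σ.symm i)),
    w.map_mul, σ.apply_symm_apply]
  exact le_add_of_le_of_nonneg (hγ _) hrest

theorem min_map_row_eq_zero {R Γ₀ : Type*} [CommRing R] [LinearOrderedAddCommMonoidWithTop Γ₀]
    (w : AddValuation R Γ₀) {k : Matrix (Fin 2) (Fin 2) R} (hk : ∀ i j, 0 ≤ w (k i j))
    (hdet : w k.det = 0) (i : Fin 2) : min (w (k i 0)) (w (k i 1)) = 0 :=
  le_antisymm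
    (hdet ▸ le_map_det_of_forall_le_row w hk
      (Fin.forall_fin_two.2 ⟨min_le_left _ _, min_le_right _ _⟩))
    (le_min (hk i 0) (hk i 1))

variable {F Γ₀ : Type*} [Field F] [LinearOrderedAddCommMonoidWithTop Γ₀] (w : AddValuation F Γ₀)
  {y : F} {k b k₂ : Matrix (Fin 2) (Fin 2) F}

theorem map_apply_zero_zero_eq_min_of_mul_aMat_eq (hk : ∀ i j, 0 ≤ w (k i j)) (hkdet : w k.det = 0)
    (hk₂ : ∀ i j, 0 ≤ w (k₂ i j)) (hk₂det : w k₂.det = 0) (hy : 0 ≤ w y) (hb : b 1 0 = 0)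
    (h : k * aMat y = b * k₂) : w (b 0 0) = min (w (k₂ 1 0)) (w y) := by
  have hcol := congrArg (fun m i => w (m i 0)) (det_smul_mul_adjugate_eq_of_mul_eq_mul h)
  have htop : w y + w (k₂ 1 1) = w (k 1 1) + w (b 0 0) := by
    simpa [aMat, adjugate_fin_two, vecMul, dotProduct, hb, hkdet, hk₂det] using congrFun hcol 0
  have hbot : w (k₂ 1 0) = w (k 1 0) + w (b 0 0) := by
    simpa [aMat, adjugate_fin_two, vecMul, dotProduct, hb, hkdet, hk₂det] using congrFun hcol 1
  calc w (b 0 0) = min (w (k 1 0)) (w (k 1 1)) + w (b 0 0) := by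
        rw [min_map_row_eq_zero w hk hkdet, zero_add]
    _ = min (w (k₂ 1 0)) (w y + w (k₂ 1 1)) := by rw [hbot, htop, min_add_add_right]
    _ = min (w (k₂ 1 0)) (w y) :=
        min_add_eq_min_of_min_eq_zero hy (min_map_row_eq_zero w hk₂ hk₂det 1)

theorem map_apply_zero_zero_add_map_apply_one_one_of_mul_aMat_eq (hkdet : w k.det = 0)
    (hk₂det : w k₂.det = 0) (hb : b 1 0 = 0) (h : k * aMat y = b * k₂) :
    w (b 0 0) + w (b 1 1) = w y := by
  simpa [det_mul, det_fin_two b, aMat, hb, hkdet, hk₂det, eq_comm] using congrArg (w ·.det) h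

end AddValuation

section OfNeZero

variable {R Γ : Type*} [Ring R] [IsDomain R] [AddCommGroup Γ] [LinearOrder Γ]
  [IsOrderedAddMonoid Γ]

open scoped Classical in
/-- The additive valuation on a domain attached to a function `v` that obeys the valuation axioms
on nonzero elements: the value of `v` at `0` is replaced by `⊤`. -/
noncomputable def addValuationOfNeZero (v : R → Γ)
    (hmul : ∀ x y : R, x ≠ 0 → y ≠ 0 → v (x * y) = v x + v y)
    (hadd : ∀ x y : R, x ≠ 0 → y ≠ 0 → x + y ≠ 0 → min (v x) (v y) ≤ v (x + y)) :
    AddValuation R (WithTop Γ) :=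
  AddValuation.of (fun x => if x = 0 then ⊤ else (v x : WithTop Γ)) (if_pos rfl)
    (by
      have h := hmul 1 1 one_ne_zero one_ne_zero
      rw [mul_one, left_eq_add] at h
      simp [h])
    (fun x y => by
      by_cases hx : x = 0
      · simp [hx]
      by_cases hy : y = 0
      · simp [hy]
      by_cases hxy : x + y = 0
      · simp [hxy]
      simpa only [hx, hy, hxy, if_false, ← WithTop.coe_min, WithTop.coe_le_coe]
        using hadd x y hx hy hxy)
    (fun x y => by
      by_cases hx : x = 0
      · simp [hx]
      by_cases hy : y = 0
      · simp [hy]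
      simp only [hx, hy, mul_eq_zero, or_self, if_false, hmul x y hx hy, WithTop.coe_add])

theorem addValuationOfNeZero_apply {v : R → Γ}
    (hmul : ∀ x y : R, x ≠ 0 → y ≠ 0 → v (x * y) = v x + v y)
    (hadd : ∀ x y : R, x ≠ 0 → y ≠ 0 → x + y ≠ 0 → min (v x) (v y) ≤ v (x + y)) {x : R}
    (hx : x ≠ 0) : addValuationOfNeZero v hmul hadd x = v x :=
  if_neg hx

theorem map_pow_eq_nsmul_of_ne_zero {v : R → Γ}
    (hmul : ∀ x y : R, x ≠ 0 → y ≠ 0 → v (x * y) = v x + v y) {x : R} (hx : x ≠ 0) (n : ℕ) :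
    v (x ^ n) = n • v x := by
  induction n with
  | zero => simpa using hmul 1 1 one_ne_zero one_ne_zero
  | succ n ih => rw [pow_succ, hmul _ _ (pow_ne_zero n hx) hx, ih, succ_nsmul]

variable {F : Type*} [Field F] {v : F → ℤ}
  (hmul : ∀ x y : F, x ≠ 0 → y ≠ 0 → v (x * y) = v x + v y)
  (hadd : ∀ x y : F, x ≠ 0 → y ≠ 0 → x + y ≠ 0 → min (v x) (v y) ≤ v (x + y))

theorem inO_iff_addValuationOfNeZero_nonneg {x : F} :
    InO v x ↔ 0 ≤ addValuationOfNeZero v hmul hadd x := by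
  by_cases hx : x = 0
  · simp [InO, hx]
  · simp [InO, hx, addValuationOfNeZero_apply hmul hadd hx]

theorem inK_iff_addValuationOfNeZero {k : Matrix (Fin 2) (Fin 2) F} :
    InK v k ↔ (∀ i j, 0 ≤ addValuationOfNeZero v hmul hadd (k i j)) ∧
      addValuationOfNeZero v hmul hadd k.det = 0 := by
  simp only [InK, inO_iff_addValuationOfNeZero_nonneg hmul hadd]
  by_cases hdet : k.det = 0
  · simp [hdet]
  · simp [hdet, addValuationOfNeZero_apply hmul hadd hdet]

theorem coe_lInv (n : ℕ) (c : F) :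
    (lInv v n c : WithTop ℤ) = min (addValuationOfNeZero v hmul hadd c) ((n : ℤ) : WithTop ℤ) := by
  by_cases hc : c = 0
  · simp [lInv, hc]
  · rw [lInv, if_neg hc, addValuationOfNeZero_apply hmul hadd hc, WithTop.coe_min]

end OfNeZero

theorem stmt_6_general {F : Type*} [Field F] (v : F → ℤ)
    (hmul : ∀ x y : F, x ≠ 0 → y ≠ 0 → v (x * y) = v x + v y)
    (hadd : ∀ x y : F, x ≠ 0 → y ≠ 0 → x + y ≠ 0 → min (v x) (v y) ≤ v (x + y))
    {y : F} (hy0 : y ≠ 0) (hy : 0 ≤ v y) {n : ℕ} (hyn : v y ≤ n)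
    {k b k₂ : Matrix (Fin 2) (Fin 2) F} (hk : InK v k) (hb : b 1 0 = 0) (hk₂ : InK v k₂)
    (hIwasawa : k * aMat y = b * k₂) :
    v (b 0 0) - v (b 1 1) - 2 * lInv v n (k₂ 1 0)
      = min (v y - 2 * lInv v n (k₂ 1 0)) (-v y) := by
  obtain ⟨hkO, hkdet⟩ := (inK_iff_addValuationOfNeZero hmul hadd).1 hk
  obtain ⟨hk₂O, hk₂det⟩ := (inK_iff_addValuationOfNeZero hmul hadd).1 hk₂
  set w := addValuationOfNeZero v hmul hadd
  have hyO : 0 ≤ w y := (inO_iff_addValuationOfNeZero_nonneg hmul hadd).1 (Or.inr hy)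
  have hwy : w y = v y := addValuationOfNeZero_apply hmul hadd hy0
  have hsum : w (b 0 0) + w (b 1 1) = v y :=
    (map_apply_zero_zero_add_map_apply_one_one_of_mul_aMat_eq w hkdet hk₂det hb hIwasawa).trans hwy
  have hd₁ : w (b 0 0) = min (lInv v n (k₂ 1 0)) (v y) := by
    rw [map_apply_zero_zero_eq_min_of_mul_aMat_eq w hkO hkdet hk₂O hk₂det hyO hb hIwasawa, hwy,
      WithTop.coe_min, coe_lInv hmul hadd, min_assoc, min_eq_right (WithTop.coe_le_coe.2 hyn)]
  have hb00 : b 0 0 ≠ 0 := fun h0 => by simp [h0] at hsum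
  have hb11 : b 1 1 ≠ 0 := fun h0 => by simp [h0] at hsum
  rw [addValuationOfNeZero_apply hmul hadd hb00] at hd₁ hsum
  rw [addValuationOfNeZero_apply hmul hadd hb11] at hsum
  norm_cast at hd₁ hsum
  omega

/-- Lemma on the invariant `t(g)` for `g ∈ K·a(ϖ^{n₁})`: writing
`k·a(ϖ^{n₁}) = b·k₂` (Iwasawa decomposition) with `b` upper triangular with
diagonal `d₁, d₂` and `k₂ ∈ K`, and `l = min(v(k₂ 1 0), n)`, one has
`v(d₁) − v(d₂) − 2l = min(n₁ − 2l, −n₁)`. -/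
theorem stmt_6 {F : Type*} [Field F] [CharZero F] (v : F → ℤ)
    (hmul : ∀ x y : F, x ≠ 0 → y ≠ 0 → v (x * y) = v x + v y)
    (hadd : ∀ x y : F, x ≠ 0 → y ≠ 0 → x + y ≠ 0 → min (v x) (v y) ≤ v (x + y))
    (ϖ : F) (hϖ0 : ϖ ≠ 0) (hϖ : v ϖ = 1)
    (n n₁ : ℕ) (hn₁ : n₁ = (n + 1) / 2)
    (k : Matrix (Fin 2) (Fin 2) F) (hk : InK v k)
    (b k₂ : Matrix (Fin 2) (Fin 2) F)
    (hb : b 1 0 = 0) (hbinv : b.det ≠ 0) (hk₂ : InK v k₂)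
    (hIwasawa : k * aMat (ϖ ^ n₁) = b * k₂) :
    v (b 0 0) - v (b 1 1) - 2 * lInv v n (k₂ 1 0)
      = min ((n₁ : ℤ) - 2 * lInv v n (k₂ 1 0)) (-(n₁ : ℤ)) := by
  have hy : v (ϖ ^ n₁) = n₁ := by rw [map_pow_eq_nsmul_of_ne_zero hmul hϖ0, hϖ, nsmul_one]
  simpa only [hy] using
    stmt_6_general v hmul hadd (pow_ne_zero n₁ hϖ0) (by omega) (by omega) hk hb hk₂ hIwasawa
end

section
/- Let n ≥ 0, n₁ = ⌈n/2⌉, n₀ = ⌊n/2⌋, and let m₁ ≥ 0 be an integer. Let K′ = {[[a,b],[c,d]] ∈ K : a − 1 ∈ 𝔭^{n₀+m₁}, d − 1 ∈ 𝔭^{n₀+m₁}, b ∈ 𝔭^{n₁+m₁}, c ∈ 𝔭^{n₀+m₁}}. Then the double coset space B(F)\GL₂(F)/K′ is finite, and there is an absolute constant C (independent of F, q, n, m₁) such that its cardinality is at most C·q^{n₀+m₁}. -/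
open Matrix

section

variable {F : Type*} [Field F]

/-- Membership in the congruence subgroup `K′`:
`a − 1, d − 1, c ∈ 𝔭^{n₀+m₁}` and `b ∈ 𝔭^{n₁+m₁}`. -/
def InK' (v : F → ℤ) (n₀ n₁ m₁ : ℕ) (k : Matrix (Fin 2) (Fin 2) F) : Prop :=
  InK v k ∧ InP v (n₀ + m₁) (k 0 0 - 1) ∧ InP v (n₀ + m₁) (k 1 1 - 1) ∧
    InP v (n₁ + m₁) (k 0 1) ∧ InP v (n₀ + m₁) (k 1 0)

/-- The double coset relation on `GL₂(F)` for `B(F)\GL₂(F)/K′`: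
`g ∼ g′` iff `g′ = b·g·k⁻¹` with `b ∈ B(F)` upper triangular and `k ∈ K′`. -/
def DCRel (v : F → ℤ) (n₀ n₁ m₁ : ℕ) (g g' : GL (Fin 2) F) : Prop :=
  ∃ b k : GL (Fin 2) F, (b : Matrix (Fin 2) (Fin 2) F) 1 0 = 0 ∧
    InK' v n₀ n₁ m₁ (k : Matrix (Fin 2) (Fin 2) F) ∧ g' = b * g * k⁻¹

end

/-!
A coset in `B(F)\GL₂(F)` is determined by the line spanned by the bottom row `(c, d)`, a point of
`ℙ¹(F)`. Every such point lies in one of two charts: `(x : 1)` with `x ∈ 𝔬`, or `(1 : y)` with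
`y ∈ 𝔭`. The lower unipotents in `K'` translate `x` by `𝔭^(n₀ + m₁)` and the upper unipotents
translate `y` by `𝔭^(n₁ + m₁)`, so `K'` has at most `#(𝔬 / 𝔭^(n₀ + m₁)) = q^(n₀ + m₁)` orbits in the
first chart and, since `n₁ ≤ n₀ + 1`, at most `#(𝔭 / 𝔭^(n₀ + m₁ + 1)) = q^(n₀ + m₁)` in the second.
-/

section Valuation

variable {F : Type*} [Field F] {v : F → ℤ}

theorem inP_zero_iff {x : F} : InP v 0 x ↔ InO v x := by
  simp only [InP, InO, Nat.cast_zero]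

theorem InP.mono {r s : ℕ} {x : F} (hx : InP v s x) (hrs : r ≤ s) : InP v r x :=
  hx.imp_right (Nat.cast_le.2 hrs).trans

theorem InP.inO {r : ℕ} {x : F} (hx : InP v r x) : InO v x :=
  inP_zero_iff.1 (hx.mono r.zero_le)

variable (hmul : ∀ x y : F, x ≠ 0 → y ≠ 0 → v (x * y) = v x + v y)

include hmul

theorem valuation_one : v 1 = 0 := by
  simpa using hmul 1 1 one_ne_zero one_ne_zero

theorem valuation_inv {x : F} (hx : x ≠ 0) : v x⁻¹ = -v x := by
  have h := hmul x x⁻¹ hx (inv_ne_zero hx)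
  rw [mul_inv_cancel₀ hx, valuation_one hmul] at h
  omega

theorem inO_inv_of_not_inP_one {x : F} (hx : ¬InP v 1 x) : InO v x⁻¹ := by
  simp only [InP, not_or, Nat.cast_one, not_le] at hx
  right
  rw [valuation_inv hmul hx.1]
  omega

theorem inP_add_mul_iff {a : F} {k r : ℕ} (ha : a ≠ 0) (hva : v a = k) {x : F} :
    InP v (k + r) (a * x) ↔ InP v r x := by
  by_cases hx : x = 0
  · simp [InP, hx]
  · simp [InP, ha, hx, hmul a x ha hx, hva]

end Valuation

section Covers

variable {F : Type*} [Field F] {v : F → ℤ}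

/-- `S` meets every class of `𝔭^k` modulo `𝔭^r`. The elements of `S` are required neither to lie
in `𝔭^k` nor to be pairwise incongruent, so that `S.card` only bounds the number of classes. -/
def CoversCosets (v : F → ℤ) (S : Finset F) (k r : ℕ) : Prop :=
  ∀ x, InP v k x → ∃ s ∈ S, InP v r (x - s)

theorem coversCosets_singleton_zero (v : F → ℤ) (k : ℕ) : CoversCosets v {0} k k :=
  fun x hx => ⟨0, Finset.mem_singleton_self 0, by rwa [sub_zero]⟩

theorem CoversCosets.mono_right {S : Finset F} {k r s : ℕ} (hS : CoversCosets v S k s)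
    (hrs : r ≤ s) : CoversCosets v S k r := fun x hx =>
  let ⟨t, ht, hxt⟩ := hS x hx
  ⟨t, ht, hxt.mono hrs⟩

open scoped Pointwise in
theorem CoversCosets.add [DecidableEq F] {S T : Finset F} {k l r : ℕ} (hS : CoversCosets v S k l)
    (hT : CoversCosets v T l r) : CoversCosets v (S + T) k r := by
  intro x hx
  obtain ⟨s, hs, hxs⟩ := hS x hx
  obtain ⟨t, ht, hxst⟩ := hT (x - s) hxs
  exact ⟨s + t, Finset.add_mem_add hs ht, by rwa [← sub_sub]⟩

variable (hmul : ∀ x y : F, x ≠ 0 → y ≠ 0 → v (x * y) = v x + v y)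

include hmul

theorem CoversCosets.image_mul_left [DecidableEq F] {S : Finset F} {a : F} {j k r : ℕ}
    (ha : a ≠ 0) (hva : v a = j) (hS : CoversCosets v S k r) :
    CoversCosets v (S.image (a * ·)) (j + k) (j + r) := by
  intro x hx
  obtain ⟨y, rfl⟩ : ∃ y, x = a * y := ⟨a⁻¹ * x, (mul_inv_cancel_left₀ ha x).symm⟩
  obtain ⟨s, hs, hys⟩ := hS y ((inP_add_mul_iff hmul ha hva).1 hx)
  refine ⟨a * s, Finset.mem_image_of_mem _ hs, ?_⟩
  rw [← mul_sub]
  exact (inP_add_mul_iff hmul ha hva).2 hys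

open scoped Pointwise in
theorem exists_coversCosets_card_le_pow {ϖ : F} (hϖ : ϖ ≠ 0) (hvϖ : v ϖ = 1) {R : Finset F}
    (hR : CoversCosets v R 0 1) (N : ℕ) :
    ∃ S : Finset F, S.card ≤ R.card ^ N ∧ CoversCosets v S 0 N := by
  classical
  induction N with
  | zero => exact ⟨{0}, by simp, coversCosets_singleton_zero v 0⟩
  | succ N ih =>
    obtain ⟨S, hS_card, hS⟩ := ih
    have hϖS : CoversCosets v (S.image (ϖ * ·)) 1 (N + 1) := by
      simpa only [add_comm 1] using hS.image_mul_left hmul hϖ (j := 1) (by simpa using hvϖ)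
    refine ⟨R + S.image (ϖ * ·), ?_, hR.add hϖS⟩
    calc (R + S.image (ϖ * ·)).card
        ≤ R.card * (S.image (ϖ * ·)).card := Finset.card_add_le
      _ ≤ R.card * R.card ^ N := by gcongr; exact Finset.card_image_le.trans hS_card
      _ = R.card ^ (N + 1) := (pow_succ' _ _).symm

end Covers

open Matrix.GeneralLinearGroup (upperRightHom)

/-- The lower unipotent subgroup `x ↦ [1, 0; x, 1]` of `GL₂`, bundled as an `AddChar` like its upper
counterpart `Matrix.GeneralLinearGroup.upperRightHom`. -/
def lowerLeftHom {A : Type*} [Ring A] : AddChar A (GL (Fin 2) A) where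
  toFun x := ⟨!![1, 0; x, 1], !![1, 0; -x, 1], by simp [one_fin_two], by simp [one_fin_two]⟩
  map_zero_eq_one' := by simp [Units.ext_iff, one_fin_two]
  map_add_eq_mul' a b := by simp [Units.ext_iff]

section DoubleCosets

variable {F : Type*} [Field F] {v : F → ℤ} {n₀ n₁ m₁ : ℕ}

theorem quot_mk_mul_of_inK' (g : GL (Fin 2) F) {k : GL (Fin 2) F} (hk : InK' v n₀ n₁ m₁ k.val) :
    Quot.mk (DCRel v n₀ n₁ m₁) (g * k) = Quot.mk _ g :=
  Quot.sound ⟨1, k, by simp, hk, by group⟩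

variable (hmul : ∀ x y : F, x ≠ 0 → y ≠ 0 → v (x * y) = v x + v y)

include hmul

theorem inK'_lowerLeftHom {x : F} (hx : InP v (n₀ + m₁) x) :
    InK' v n₀ n₁ m₁ (lowerLeftHom x).val := by
  simpa [InK', InK, Fin.forall_fin_two, lowerLeftHom, InO, InP, valuation_one hmul]
    using ⟨hx.inO, hx⟩

theorem inK'_upperRightHom {y : F} (hy : InP v (n₁ + m₁) y) :
    InK' v n₀ n₁ m₁ (upperRightHom y).val := by
  simpa [InK', InK, Fin.forall_fin_two, InO, InP, valuation_one hmul] using ⟨hy.inO, hy⟩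

theorem quot_mk_lowerLeftHom_eq {x s : F} (hxs : InP v (n₀ + m₁) (x - s)) :
    Quot.mk (DCRel v n₀ n₁ m₁) (lowerLeftHom x) = Quot.mk _ (lowerLeftHom s) := by
  rw [← add_sub_cancel s x, AddChar.map_add_eq_mul]
  exact quot_mk_mul_of_inK' _ (inK'_lowerLeftHom hmul hxs)

theorem quot_mk_mul_upperRightHom_eq (g : GL (Fin 2) F) {y t : F}
    (hyt : InP v (n₁ + m₁) (y - t)) :
    Quot.mk (DCRel v n₀ n₁ m₁) (g * upperRightHom y) = Quot.mk _ (g * upperRightHom t) := by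
  rw [← add_sub_cancel t y, AddChar.map_add_eq_mul, ← mul_assoc]
  exact quot_mk_mul_of_inK' _ (inK'_upperRightHom hmul hyt)

theorem quot_mk_eq_of_mul_inv_upperTriangular {g h : GL (Fin 2) F}
    (hgh : (g * h⁻¹).val 1 0 = 0) : Quot.mk (DCRel v n₀ n₁ m₁) g = Quot.mk _ h := by
  have h_one : InK' v n₀ n₁ m₁ (1 : GL (Fin 2) F).val := by
    rw [← AddChar.map_zero_eq_one upperRightHom]
    exact inK'_upperRightHom hmul (.inl rfl)
  exact (Quot.sound ⟨g * h⁻¹, 1, hgh, h_one, by group⟩).symm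

theorem quot_mk_eq_lowerLeftHom {g : GL (Fin 2) F} (hd : g.val 1 1 ≠ 0) :
    Quot.mk (DCRel v n₀ n₁ m₁) g = Quot.mk _ (lowerLeftHom (g.val 1 0 / g.val 1 1)) := by
  apply quot_mk_eq_of_mul_inv_upperTriangular hmul
  rw [← AddChar.map_neg_eq_inv]
  simp [lowerLeftHom, Matrix.mul_apply, Fin.sum_univ_two, mul_div_cancel₀ _ hd]

theorem quot_mk_eq_swap_mul_upperRightHom {g : GL (Fin 2) F} (hc : g.val 1 0 ≠ 0) :
    Quot.mk (DCRel v n₀ n₁ m₁) g =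
      Quot.mk _ (GeneralLinearGroup.swap F 0 1 * upperRightHom (g.val 1 1 / g.val 1 0)) := by
  apply quot_mk_eq_of_mul_inv_upperTriangular hmul
  have hswap : (GeneralLinearGroup.swap F 0 1 : GL (Fin 2) F)⁻¹.val = Matrix.swap F 0 1 := rfl
  rw [_root_.mul_inv_rev, ← AddChar.map_neg_eq_inv, ← mul_assoc, Units.val_mul, hswap,
    Matrix.mul_swap_apply_left]
  simp [Matrix.mul_apply, Fin.sum_univ_two, mul_div_cancel₀ _ hc]

theorem exists_quot_mk_eq_lowerLeftHom_or_swap_mul_upperRightHom (g : GL (Fin 2) F) :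
    (∃ x, InO v x ∧ Quot.mk (DCRel v n₀ n₁ m₁) g = Quot.mk _ (lowerLeftHom x)) ∨
      ∃ y, InP v 1 y ∧ Quot.mk (DCRel v n₀ n₁ m₁) g =
        Quot.mk _ (GeneralLinearGroup.swap F 0 1 * upperRightHom y) := by
  by_cases hc : g.val 1 0 = 0
  · have hd : g.val 1 1 ≠ 0 := fun hd => g.det_ne_zero (by simp [Matrix.det_fin_two, hc, hd])
    exact .inl ⟨_, .inl (by rw [hc, zero_div]), quot_mk_eq_lowerLeftHom hmul hd⟩
  by_cases hy : InP v 1 (g.val 1 1 / g.val 1 0)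
  · exact .inr ⟨_, hy, quot_mk_eq_swap_mul_upperRightHom hmul hc⟩
  · have hd : g.val 1 1 ≠ 0 := fun hd => hy (.inl (by rw [hd, zero_div]))
    have hx : InO v (g.val 1 0 / g.val 1 1) :=
      inv_div (g.val 1 1) _ ▸ inO_inv_of_not_inP_one hmul hy
    exact .inl ⟨_, hx, quot_mk_eq_lowerLeftHom hmul hd⟩

theorem finite_quot_dcRel_and_card_le {S T : Finset F} (hS : CoversCosets v S 0 (n₀ + m₁))
    (hT : CoversCosets v T 1 (n₁ + m₁)) :
    Finite (Quot (DCRel v n₀ n₁ m₁)) ∧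
      Nat.card (Quot (DCRel v n₀ n₁ m₁)) ≤ S.card + T.card := by
  let rep : S ⊕ T → Quot (DCRel v n₀ n₁ m₁) :=
    Sum.elim (fun s => Quot.mk _ (lowerLeftHom s.1))
      (fun t => Quot.mk _ (GeneralLinearGroup.swap F 0 1 * upperRightHom t.1))
  have hrep : Function.Surjective rep := by
    rintro ⟨g⟩
    rcases exists_quot_mk_eq_lowerLeftHom_or_swap_mul_upperRightHom hmul g with
      ⟨x, hx, hg⟩ | ⟨y, hy, hg⟩
    · obtain ⟨s, hs, hxs⟩ := hS x (inP_zero_iff.2 hx)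
      exact ⟨.inl ⟨s, hs⟩, (hg.trans (quot_mk_lowerLeftHom_eq hmul hxs)).symm⟩
    · obtain ⟨t, ht, hyt⟩ := hT y hy
      exact ⟨.inr ⟨t, ht⟩, (hg.trans (quot_mk_mul_upperRightHom_eq hmul _ hyt)).symm⟩
  exact ⟨Finite.of_surjective rep hrep, by simpa using Nat.card_le_card_of_surjective rep hrep⟩

end DoubleCosets

theorem stmt_8_general {F : Type*} [Field F] {v : F → ℤ}
    (hmul : ∀ x y : F, x ≠ 0 → y ≠ 0 → v (x * y) = v x + v y)
    (_ : ∀ x y : F, x ≠ 0 → y ≠ 0 → x + y ≠ 0 → min (v x) (v y) ≤ v (x + y))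
    {ϖ : F} (hϖ : ϖ ≠ 0) (hvϖ : v ϖ = 1) {R : Finset F}
    (hR : ∀ x : F, InO v x → ∃ r ∈ R, InP v 1 (x - r)) {n₀ n₁ : ℕ} (hn : n₁ ≤ n₀ + 1) (m₁ : ℕ) :
    Finite (Quot (DCRel v n₀ n₁ m₁)) ∧
      Nat.card (Quot (DCRel v n₀ n₁ m₁)) ≤ 2 * R.card ^ (n₀ + m₁) := by
  classical
  obtain ⟨S, hS_card, hS⟩ := exists_coversCosets_card_le_pow hmul hϖ hvϖ
    (fun x hx => hR x (inP_zero_iff.1 hx)) (n₀ + m₁)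
  have hϖS : CoversCosets v (S.image (ϖ * ·)) 1 (n₁ + m₁) :=
    (hS.image_mul_left hmul hϖ (j := 1) (by simpa using hvϖ)).mono_right (by omega)
  obtain ⟨hfin, hcard⟩ := finite_quot_dcRel_and_card_le hmul hS hϖS
  refine ⟨hfin, hcard.trans ?_⟩
  rw [two_mul]
  exact Nat.add_le_add hS_card (Finset.card_image_le.trans hS_card)

/-- The double coset space `B(F)\GL₂(F)/K′` is finite of cardinality
`≤ C·q^{n₀+m₁}` for an absolute constant `C`. -/
theorem stmt_8 :
    ∃ C : ℝ, 0 < C ∧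
      ∀ (F : Type) (_ : Field F) (_ : CharZero F) (v : F → ℤ),
        (∀ x y : F, x ≠ 0 → y ≠ 0 → v (x * y) = v x + v y) →
        (∀ x y : F, x ≠ 0 → y ≠ 0 → x + y ≠ 0 → min (v x) (v y) ≤ v (x + y)) →
        ∀ ϖ : F, ϖ ≠ 0 → v ϖ = 1 →
        ∀ (q : ℕ) (R : Finset F), R.card = q →
          (∀ r ∈ R, InO v r) →
          (∀ x : F, InO v x → ∃ r ∈ R, InP v 1 (x - r)) →
          (∀ r₁ ∈ R, ∀ r₂ ∈ R, InP v 1 (r₁ - r₂) → r₁ = r₂) →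
        ∀ n n₁ n₀ m₁ : ℕ, n₁ = (n + 1) / 2 → n₀ = n / 2 →
          Finite (Quot (DCRel v n₀ n₁ m₁)) ∧
            (Nat.card (Quot (DCRel v n₀ n₁ m₁)) : ℝ) ≤ C * (q : ℝ) ^ (n₀ + m₁) := by
  refine ⟨2, two_pos, fun F _ _ v hmul hadd ϖ hϖ hvϖ q R hq _ hR _ n n₁ n₀ m₁ hn₁ hn₀ => ?_⟩
  exact_mod_cast hq ▸ stmt_8_general hmul hadd hϖ hvϖ hR (by omega : n₁ ≤ n₀ + 1) m₁
end

section
/- Let n ≥ 0, n₁ = ⌈n/2⌉, n₀ = ⌊n/2⌋, and let m₁ ≥ 0 be an integer. Let K′ = {[[a,b],[c,d]] ∈ K : a − 1 ∈ 𝔭^{n₀+m₁}, d − 1 ∈ 𝔭^{n₀+m₁}, b ∈ 𝔭^{n₁+m₁}, c ∈ 𝔭^{n₀+m₁}} and K⁰ = K^0(𝔭^{n₁−n₀}). Then K′ is a subgroup of K and is normalized by K⁰ (i.e. k k′ k^{−1} ∈ K′ for all k ∈ K⁰ and k′ ∈ K′); moreover, for all k ∈ K⁰ and k′ ∈ K′,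 the top-left entries of k′ and of k k′ k^{−1} are congruent modulo 𝔭^{n₁+m₁}. -/
open Matrix

/-!
Put `d = n₁ - n₀` and `s = n₀ + m₁`. The matrices `[[𝔬, 𝔭^d], [𝔬, 𝔬]]` form an (Eichler) order `R`,
with `K⁰ = Rˣ`, and since `n₁ + m₁ = s + d`, the group `K′` consists of the units of `R` that are
`1` modulo the two-sided ideal `𝔭^s R`. It is therefore a normal subgroup of `K⁰`. As `R` is lower
triangular modulo `𝔭^d`, the top-left entry is multiplicative modulo `𝔭^d`, with values in a
commutative ring; hence it does not change modulo `𝔭^(s + d)` when an element of `𝔭^s R` is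
conjugated by `K⁰`.
-/

theorem units_conj_sub_one {A : Type*} [Ring A] (u x : Aˣ) :
    (u * x * u⁻¹ : Aˣ).val - 1 = u * (x.val - 1) * u⁻¹.val := by
  simp [mul_sub, sub_mul]

theorem natCast_add_natCast_sub {A : Type*} [AddMonoidWithOne A] {m n : ℕ} (hmn : m ≤ n) (r : ℕ) :
    ((m + r : ℕ) + (n - m : ℕ) : A) = (n + r : ℕ) := by
  rw [← Nat.cast_add, add_right_comm, Nat.add_sub_cancel' hmn]

section EichlerLattice

variable {R Γ : Type*} [CommRing R] [LinearOrderedAddCommMonoidWithTop Γ]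
  {w : AddValuation R Γ} {d s t : Γ}

theorem add_le_addValuation_mul {x y : R} (hx : s ≤ w x) (hy : t ≤ w y) : s + t ≤ w (x * y) := by
  rw [w.map_mul]
  exact add_le_add hx hy

theorem addValuation_ringInverse_eq_zero {x : R} (hx : IsUnit x) (hwx : w x = 0) :
    w (Ring.inverse x) = 0 := by
  simpa [hwx] using congrArg w (Ring.mul_inverse_cancel x hx)

/-- The lattice `𝔭^s [[𝔬, 𝔭^d], [𝔬, 𝔬]]` of two-by-two matrices, where `𝔭^r` stands for the set of
elements of valuation at least `r`. For `s = 0 ≤ d` it is an Eichler order. -/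
def eichlerLattice (w : AddValuation R Γ) (d s : Γ) : AddSubgroup (Matrix (Fin 2) (Fin 2) R) where
  carrier := {x | s ≤ w (x 0 0) ∧ s + d ≤ w (x 0 1) ∧ s ≤ w (x 1 0) ∧ s ≤ w (x 1 1)}
  zero_mem' := by simp
  add_mem' := fun ⟨ha, hb, hc, hd⟩ ⟨ha', hb', hc', hd'⟩ =>
    ⟨w.map_le_add ha ha', w.map_le_add hb hb', w.map_le_add hc hc', w.map_le_add hd hd'⟩
  neg_mem' := by simp

namespace eichlerLattice

variable {c : R} {x y k l : Matrix (Fin 2) (Fin 2) R}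

theorem mem_iff : x ∈ eichlerLattice w d s ↔
    s ≤ w (x 0 0) ∧ s + d ≤ w (x 0 1) ∧ s ≤ w (x 1 0) ∧ s ≤ w (x 1 1) :=
  Iff.rfl

theorem one_mem : 1 ∈ eichlerLattice w d 0 := by
  simp [mem_iff]

theorem le_of_le (hst : s ≤ t) : eichlerLattice w d t ≤ eichlerLattice w d s :=
  fun _ ⟨ha, hb, hc, hd⟩ =>
    ⟨hst.trans ha, (add_le_add_left hst d).trans hb, hst.trans hc, hst.trans hd⟩

theorem mem_zero_of_sub_one_mem (hs : 0 ≤ s) (hx : x - 1 ∈ eichlerLattice w d s) :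
    x ∈ eichlerLattice w d 0 := by
  simpa using add_mem (le_of_le hs hx) one_mem

theorem smul_mem (hc : 0 ≤ w c) (hx : x ∈ eichlerLattice w d s) :
    c • x ∈ eichlerLattice w d s := by
  have le_smul {r : Γ} {a : R} (ha : r ≤ w a) : r ≤ w (c * a) := by
    simpa using add_le_addValuation_mul hc ha
  obtain ⟨h00, h01, h10, h11⟩ := hx
  exact ⟨le_smul h00, le_smul h01, le_smul h10, le_smul h11⟩

theorem adjugate_mem (hx : x ∈ eichlerLattice w d s) : x.adjugate ∈ eichlerLattice w d s := by
  obtain ⟨h00, h01, h10, h11⟩ := hx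
  rw [adjugate_fin_two, mem_iff]
  simpa using ⟨h11, h01, h10, h00⟩

theorem mul_mem (hd : 0 ≤ d) (hx : x ∈ eichlerLattice w d s) (hy : y ∈ eichlerLattice w d t) :
    x * y ∈ eichlerLattice w d (s + t) := by
  obtain ⟨x00, x01, x10, x11⟩ := hx
  obtain ⟨y00, y01, y10, y11⟩ := hy
  have x01' : s ≤ w (x 0 1) := (le_add_of_nonneg_right hd).trans x01
  have y01' : t ≤ w (y 0 1) := (le_add_of_nonneg_right hd).trans y01
  simp only [mem_iff, mul_apply, Fin.sum_univ_two]
  refine ⟨w.map_le_add (add_le_addValuation_mul x00 y00) (add_le_addValuation_mul x01' y10),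
    w.map_le_add ?_ ?_,
    w.map_le_add (add_le_addValuation_mul x10 y00) (add_le_addValuation_mul x11 y10),
    w.map_le_add (add_le_addValuation_mul x10 y01') (add_le_addValuation_mul x11 y11)⟩
  · simpa only [add_assoc] using add_le_addValuation_mul x00 y01
  · simpa only [add_right_comm] using add_le_addValuation_mul x01 y11

theorem le_map_mul_apply_zero_zero_sub (hx : x ∈ eichlerLattice w d s)
    (hy : y ∈ eichlerLattice w d t) :
    s + d + t ≤ w ((x * y) 0 0 - x 0 0 * y 0 0) := by
  have h : (x * y) 0 0 - x 0 0 * y 0 0 = x 0 1 * y 1 0 := by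
    rw [mul_apply, Fin.sum_univ_two, add_sub_cancel_left]
  rw [h]
  exact add_le_addValuation_mul hx.2.1 hy.2.2.1

theorem le_map_conj_apply_zero_zero_sub (hd : 0 ≤ d) (hk : k ∈ eichlerLattice w d 0)
    (hl : l ∈ eichlerLattice w d 0) (hkl : k * l = 1) (hx : x ∈ eichlerLattice w d s) :
    s + d ≤ w ((k * x * l) 0 0 - x 0 0) := by
  have hkx : k * x ∈ eichlerLattice w d s := by simpa using mul_mem hd hk hx
  have h₁ : s + d ≤ w ((k * x * l) 0 0 - (k * x) 0 0 * l 0 0) := by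
    simpa using le_map_mul_apply_zero_zero_sub hkx hl
  have h₂ : s + d ≤ w (((k * x) 0 0 - k 0 0 * x 0 0) * l 0 0) := by
    simpa [add_comm] using
      add_le_addValuation_mul (le_map_mul_apply_zero_zero_sub hk hx) hl.1
  have h₃ : s + d ≤ w (x 0 0 * ((k * l) 0 0 - k 0 0 * l 0 0)) := by
    simpa using add_le_addValuation_mul hx.1 (le_map_mul_apply_zero_zero_sub hk hl)
  have telescope : (k * x * l) 0 0 - x 0 0 = ((k * x * l) 0 0 - (k * x) 0 0 * l 0 0) +
      ((k * x) 0 0 - k 0 0 * x 0 0) * l 0 0 - x 0 0 * ((k * l) 0 0 - k 0 0 * l 0 0) := by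
    rw [hkl, one_apply_eq]
    ring
  rw [telescope]
  exact w.map_le_sub (w.map_le_add h₁ h₂) h₃

theorem coe_inv_mem {g : GL (Fin 2) R} (hg : g.val ∈ eichlerLattice w d s)
    (hdet : w g.val.det = 0) : g⁻¹.val ∈ eichlerLattice w d s := by
  have hinv := addValuation_ringInverse_eq_zero (isUnits_det_units g) hdet
  rw [coe_units_inv, inv_def]
  exact smul_mem hinv.ge (adjugate_mem hg)

end eichlerLattice

/-- The principal congruence subgroup of level `𝔭^s` in the units of the Eichler order
`[[𝔬, 𝔭^d], [𝔬, 𝔬]]`, as a group of invertible matrices whose determinant has valuation `0`.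
Level `s = 0` gives all such units of the order. -/
def eichlerCongruenceSubgroup (w : AddValuation R Γ) (hd : 0 ≤ d) (hs : 0 ≤ s) :
    Subgroup (GL (Fin 2) R) where
  carrier := {g | g.val - 1 ∈ eichlerLattice w d s ∧ w g.val.det = 0}
  one_mem' := by simp
  mul_mem' := by
    rintro g h ⟨hg, hgdet⟩ ⟨hh, hhdet⟩
    refine ⟨?_, by simp [hgdet, hhdet]⟩
    have hgh : (g * (h - 1) : Matrix (Fin 2) (Fin 2) R) ∈ eichlerLattice w d s := by
      simpa using eichlerLattice.mul_mem hd (eichlerLattice.mem_zero_of_sub_one_mem hs hg) hh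
    simpa [mul_sub] using add_mem hgh hg
  inv_mem' := by
    rintro g ⟨hg, hgdet⟩
    have hinv := eichlerLattice.coe_inv_mem (eichlerLattice.mem_zero_of_sub_one_mem hs hg) hgdet
    refine ⟨?_, ?_⟩
    · simpa [mul_sub] using neg_mem (eichlerLattice.mul_mem hd hinv hg)
    · rw [coe_units_inv, det_nonsing_inv]
      exact addValuation_ringInverse_eq_zero (isUnits_det_units g) hgdet

namespace eichlerCongruenceSubgroup

variable {hd : 0 ≤ d} {hs : 0 ≤ s} {k g : GL (Fin 2) R}

theorem mem_level_zero_iff : g ∈ eichlerCongruenceSubgroup w hd le_rfl ↔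
    g.val ∈ eichlerLattice w d 0 ∧ w g.val.det = 0 :=
  and_congr_left' ⟨eichlerLattice.mem_zero_of_sub_one_mem le_rfl,
    fun h => sub_mem h eichlerLattice.one_mem⟩

theorem coe_mem_eichlerLattice (hg : g ∈ eichlerCongruenceSubgroup w hd hs) :
    g.val ∈ eichlerLattice w d 0 :=
  eichlerLattice.mem_zero_of_sub_one_mem hs hg.1

theorem le_level_zero :
    eichlerCongruenceSubgroup w hd hs ≤ eichlerCongruenceSubgroup w hd le_rfl :=
  fun _ hg => mem_level_zero_iff.2 ⟨coe_mem_eichlerLattice hg, hg.2⟩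

theorem conj_mem (hk : k ∈ eichlerCongruenceSubgroup w hd le_rfl)
    (hg : g ∈ eichlerCongruenceSubgroup w hd hs) :
    k * g * k⁻¹ ∈ eichlerCongruenceSubgroup w hd hs := by
  refine ⟨?_, (mul_mem (mul_mem hk (le_level_zero hg)) (inv_mem hk)).2⟩
  rw [units_conj_sub_one]
  simpa using eichlerLattice.mul_mem hd (eichlerLattice.mul_mem hd (coe_mem_eichlerLattice hk) hg.1)
    (coe_mem_eichlerLattice (inv_mem hk))

theorem le_map_conj_apply_zero_zero_sub (hk : k ∈ eichlerCongruenceSubgroup w hd le_rfl)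
    (hg : g ∈ eichlerCongruenceSubgroup w hd hs) :
    s + d ≤ w ((k * g * k⁻¹ : GL (Fin 2) R) 0 0 - g 0 0) := by
  have h := eichlerLattice.le_map_conj_apply_zero_zero_sub hd (coe_mem_eichlerLattice hk)
    (coe_mem_eichlerLattice (inv_mem hk)) k.mul_inv hg.1
  rwa [← units_conj_sub_one, Matrix.sub_apply, Matrix.sub_apply, sub_sub_sub_cancel_right] at h

end eichlerCongruenceSubgroup

end EichlerLattice

section IntegerValuedValuation

variable {F : Type*} [Field F] {v : F → ℤ}

open Classical in
/-- The additive valuation that agrees with `v` off `0` and takes the value `⊤` at `0`; the value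
`v 0` is irrelevant. -/
noncomputable def extendedValuation (v : F → ℤ)
    (hmul : ∀ x y : F, x ≠ 0 → y ≠ 0 → v (x * y) = v x + v y)
    (hadd : ∀ x y : F, x ≠ 0 → y ≠ 0 → x + y ≠ 0 → min (v x) (v y) ≤ v (x + y)) :
    AddValuation F (WithTop ℤ) :=
  AddValuation.of (fun x => if x = 0 then ⊤ else (v x : WithTop ℤ)) (by simp)
    (by simpa using hmul 1 1 one_ne_zero one_ne_zero)
    (fun x y => by
      by_cases hx : x = 0
      · simp [hx]
      by_cases hy : y = 0
      · simp [hy]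
      by_cases hxy : x + y = 0
      · simp [hxy]
      simpa only [if_neg, hx, hy, hxy, not_false_eq_true] using mod_cast hadd x y hx hy hxy)
    (fun x y => by
      by_cases hx : x = 0
      · simp [hx]
      by_cases hy : y = 0
      · simp [hy]
      simp [hx, hy, hmul x y hx hy])

variable (hmul : ∀ x y : F, x ≠ 0 → y ≠ 0 → v (x * y) = v x + v y)
  (hadd : ∀ x y : F, x ≠ 0 → y ≠ 0 → x + y ≠ 0 → min (v x) (v y) ≤ v (x + y))
  {r n₀ n₁ m₁ : ℕ} {x : F} {k : Matrix (Fin 2) (Fin 2) F} {g : GL (Fin 2) F}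

theorem extendedValuation_of_ne_zero (hx : x ≠ 0) : extendedValuation v hmul hadd x = v x :=
  if_neg hx

theorem inP_iff_le_extendedValuation :
    InP v r x ↔ (r : WithTop ℤ) ≤ extendedValuation v hmul hadd x := by
  by_cases hx : x = 0
  · simp [InP, hx]
  · rw [extendedValuation_of_ne_zero hmul hadd hx, ← WithTop.coe_natCast, WithTop.coe_le_coe]
    simp [InP, hx]

theorem inO_iff_extendedValuation_nonneg : InO v x ↔ 0 ≤ extendedValuation v hmul hadd x := by
  simpa [InP, InO] using inP_iff_le_extendedValuation hmul hadd (r := 0)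

theorem extendedValuation_eq_zero_iff :
    extendedValuation v hmul hadd x = 0 ↔ x ≠ 0 ∧ v x = 0 := by
  by_cases hx : x = 0
  · simp [hx]
  · simp [extendedValuation_of_ne_zero hmul hadd hx, hx]

theorem inK_iff_extendedValuation : InK v k ↔ (∀ i j, 0 ≤ extendedValuation v hmul hadd (k i j)) ∧
    extendedValuation v hmul hadd k.det = 0 := by
  simp only [InK, inO_iff_extendedValuation_nonneg hmul hadd,
    extendedValuation_eq_zero_iff hmul hadd]

theorem InK.isUnit (hk : InK v k) : IsUnit k :=
  (isUnit_iff_isUnit_det k).2 (isUnit_iff_ne_zero.2 hk.2.1)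

theorem inK0upper_iff_mem_eichlerCongruenceSubgroup :
    InK0upper v r g.val ↔
      g ∈ eichlerCongruenceSubgroup (extendedValuation v hmul hadd)
        (Nat.cast_nonneg' r) le_rfl := by
  rw [eichlerCongruenceSubgroup.mem_level_zero_iff, eichlerLattice.mem_iff,
    InK0upper, inK_iff_extendedValuation hmul hadd,
    inP_iff_le_extendedValuation hmul hadd, zero_add]
  constructor
  · rintro ⟨⟨h, hdet⟩, h01⟩
    exact ⟨⟨h 0 0, h01, h 1 0, h 1 1⟩, hdet⟩
  · rintro ⟨⟨h00, h01, h10, h11⟩, hdet⟩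
    refine ⟨⟨?_, hdet⟩, h01⟩
    simpa [Fin.forall_fin_two] using
      ⟨⟨h00, (Nat.cast_nonneg' r).trans h01⟩, h10, h11⟩

theorem inK'_iff_mem_eichlerCongruenceSubgroup (hle : n₀ ≤ n₁) :
    InK' v n₀ n₁ m₁ g.val ↔
      g ∈ eichlerCongruenceSubgroup (extendedValuation v hmul hadd)
        (Nat.cast_nonneg' (n₁ - n₀)) (Nat.cast_nonneg' (n₀ + m₁)) := by
  have hentries : InP v (n₀ + m₁) (g 0 0 - 1) ∧ InP v (n₀ + m₁) (g 1 1 - 1) ∧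
      InP v (n₁ + m₁) (g 0 1) ∧ InP v (n₀ + m₁) (g 1 0) ↔
      g.val - 1 ∈ eichlerLattice (extendedValuation v hmul hadd)
        (n₁ - n₀ : ℕ) (n₀ + m₁ : ℕ) := by
    simp only [inP_iff_le_extendedValuation hmul hadd, eichlerLattice.mem_iff,
      natCast_add_natCast_sub hle, Matrix.sub_apply, one_fin_two, of_apply, cons_val_zero,
      cons_val_one, cons_val', cons_val_fin_one, sub_zero]
    tauto
  rw [InK', hentries]
  refine ⟨fun ⟨hK, hg⟩ => ⟨hg, ((inK_iff_extendedValuation hmul hadd).1 hK).2⟩,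
    fun hg => ⟨?_, hg.1⟩⟩
  have hK0 := (inK0upper_iff_mem_eichlerCongruenceSubgroup hmul hadd).2
    (eichlerCongruenceSubgroup.le_level_zero hg)
  exact hK0.1

end IntegerValuedValuation

theorem stmt_9_general {F : Type*} [Field F] (v : F → ℤ)
    (hmul : ∀ x y : F, x ≠ 0 → y ≠ 0 → v (x * y) = v x + v y)
    (hadd : ∀ x y : F, x ≠ 0 → y ≠ 0 → x + y ≠ 0 → min (v x) (v y) ≤ v (x + y))
    (n₁ n₀ m₁ : ℕ) (hle : n₀ ≤ n₁) :
    (InK' v n₀ n₁ m₁ (1 : Matrix (Fin 2) (Fin 2) F)) ∧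
    (∀ k₁ k₂ : Matrix (Fin 2) (Fin 2) F,
      InK' v n₀ n₁ m₁ k₁ → InK' v n₀ n₁ m₁ k₂ → InK' v n₀ n₁ m₁ (k₁ * k₂)) ∧
    (∀ k : Matrix (Fin 2) (Fin 2) F, InK' v n₀ n₁ m₁ k →
      ∃ h : Matrix (Fin 2) (Fin 2) F,
        InK' v n₀ n₁ m₁ h ∧ k * h = 1 ∧ h * k = 1) ∧
    (∀ k kinv : Matrix (Fin 2) (Fin 2) F, InK0upper v (n₁ - n₀) k →
      k * kinv = 1 → kinv * k = 1 →
      ∀ k' : Matrix (Fin 2) (Fin 2) F, InK' v n₀ n₁ m₁ k' →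
        InK' v n₀ n₁ m₁ (k * k' * kinv) ∧
          InP v (n₁ + m₁) ((k * k' * kinv) 0 0 - k' 0 0)) := by
  have memK' (g : GL (Fin 2) F) := inK'_iff_mem_eichlerCongruenceSubgroup hmul hadd (g := g)
    (m₁ := m₁) hle
  refine ⟨(memK' 1).2 (one_mem _), ?_, ?_, ?_⟩
  · intro k₁ k₂ hk₁ hk₂
    obtain ⟨g₁, rfl⟩ := hk₁.1.isUnit
    obtain ⟨g₂, rfl⟩ := hk₂.1.isUnit
    exact (memK' (g₁ * g₂)).2 (mul_mem ((memK' g₁).1 hk₁) ((memK' g₂).1 hk₂))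
  · intro k hk
    obtain ⟨g, rfl⟩ := hk.1.isUnit
    exact ⟨(g⁻¹ : GL (Fin 2) F), (memK' g⁻¹).2 (inv_mem ((memK' g).1 hk)), g.mul_inv, g.inv_mul⟩
  · intro k kinv hk hkkinv hkinvk k' hk'
    obtain ⟨g, rfl⟩ := hk'.1.isUnit
    let u : GL (Fin 2) F := ⟨k, kinv, hkkinv, hkinvk⟩
    have hu := (inK0upper_iff_mem_eichlerCongruenceSubgroup hmul hadd (g := u)).1 hk
    have hg := (memK' g).1 hk'
    refine ⟨(memK' (u * g * u⁻¹)).2 (eichlerCongruenceSubgroup.conj_mem hu hg), ?_⟩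
    have hcongr := eichlerCongruenceSubgroup.le_map_conj_apply_zero_zero_sub hu hg
    rw [natCast_add_natCast_sub hle] at hcongr
    exact (inP_iff_le_extendedValuation hmul hadd).2 hcongr

/-- `K′` is a subgroup of `K`, normalized by `K⁰ = K^0(𝔭^{n₁−n₀})`, and
conjugation by `K⁰` preserves the top-left entry modulo `𝔭^{n₁+m₁}`. -/
theorem stmt_9 {F : Type*} [Field F] [CharZero F] (v : F → ℤ)
    (hmul : ∀ x y : F, x ≠ 0 → y ≠ 0 → v (x * y) = v x + v y)
    (hadd : ∀ x y : F, x ≠ 0 → y ≠ 0 → x + y ≠ 0 → min (v x) (v y) ≤ v (x + y))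
    (ϖ : F) (hϖ0 : ϖ ≠ 0) (hϖ : v ϖ = 1)
    (n n₁ n₀ m₁ : ℕ) (hn₁ : n₁ = (n + 1) / 2) (hn₀ : n₀ = n / 2) :
    (InK' v n₀ n₁ m₁ (1 : Matrix (Fin 2) (Fin 2) F)) ∧
    (∀ k₁ k₂ : Matrix (Fin 2) (Fin 2) F,
      InK' v n₀ n₁ m₁ k₁ → InK' v n₀ n₁ m₁ k₂ → InK' v n₀ n₁ m₁ (k₁ * k₂)) ∧
    (∀ k : Matrix (Fin 2) (Fin 2) F, InK' v n₀ n₁ m₁ k →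
      ∃ h : Matrix (Fin 2) (Fin 2) F,
        InK' v n₀ n₁ m₁ h ∧ k * h = 1 ∧ h * k = 1) ∧
    (∀ k kinv : Matrix (Fin 2) (Fin 2) F, InK0upper v (n₁ - n₀) k →
      k * kinv = 1 → kinv * k = 1 →
      ∀ k' : Matrix (Fin 2) (Fin 2) F, InK' v n₀ n₁ m₁ k' →
        InK' v n₀ n₁ m₁ (k * k' * kinv) ∧
          InP v (n₁ + m₁) ((k * k' * kinv) 0 0 - k' 0 0)) := by
  exact stmt_9_general v hmul hadd n₁ n₀ m₁ (by omega)
end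

section
/- Let n ≥ 1, n₁ = ⌈n/2⌉, n₀ = ⌊n/2⌋, and K⁰ = K^0(𝔭^{n₁−n₀}). For u, y ∈ F^× and x ∈ F, the matrix z(u)·n(x)·a(y)·w·n(ϖ^{−n₁}) lies in a(ϖ^{−n₁})·K⁰·a(ϖ^{n₁}) if and only if v(u) = n₁, v(y) = −2n₁, ϖ^{n₁}x ∈ 𝔬, and ϖ^{2n₁}y − ϖ^{n₁}x ∈ 𝔭^{n₁−n₀}. -/
open Matrix

section

variable {F : Type*} [Field F]

def zMat (t : F) : Matrix (Fin 2) (Fin 2) F := !![t, 0; 0, t]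

end

/-!
Conjugating the product `z(u)n(x)a(y)·w·n(t⁻¹)` by `a(t)` gives `c • !![-s, b; -1, -1]` with
`c = u / t`, `s = t x` and `b = t² y - t x`, so that `s + b = t² y`. If this matrix lies in `K`,
then `c` is integral by its lower row, `c (s + b)` is integral by its upper row, and the product of
these two elements is the determinant, a unit. Hence both `c` and `s + b` are units, and the
remaining conditions only concern the entries `s` and `b`.
-/

section AddValuation

variable {R Γ₀ : Type*} [CommRing R] [LinearOrderedAddCommMonoidWithTop Γ₀]

theorem nonneg_entries_and_det_eq_zero_iff (w : AddValuation R Γ₀) (c s b : R) :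
    ((∀ i j, 0 ≤ w ((c • !![-s, b; -1, -1]) i j)) ∧ w (c • !![-s, b; -1, -1]).det = 0) ↔
      w c = 0 ∧ w (s + b) = 0 ∧ 0 ≤ w s ∧ 0 ≤ w b := by
  have w_det : w (c • !![-s, b; -1, -1]).det = w c + w (c * (s + b)) := by
    rw [← w.map_mul, det_smul, det_fin_two_of, Fintype.card_fin]
    congr 1
    ring
  have entries_nonneg : (∀ i j, 0 ≤ w ((c • !![-s, b; -1, -1]) i j)) ↔
      0 ≤ w (c * s) ∧ 0 ≤ w (c * b) ∧ 0 ≤ w c := by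
    simp [Fin.forall_fin_two, and_assoc]
  rw [entries_nonneg, w_det]
  constructor
  · rintro ⟨⟨hcs, hcb, hc⟩, hdet⟩
    have hsum : 0 ≤ w (c * (s + b)) := by
      rw [mul_add]
      exact w.map_le_add hcs hcb
    obtain ⟨hc0, hsum0⟩ := (add_eq_zero_iff_of_nonneg hc hsum).mp hdet
    rw [w.map_mul, hc0, zero_add] at hcs hcb hsum0
    exact ⟨hc0, hsum0, hcs, hcb⟩
  · rintro ⟨hc, hsum, hs, hb⟩
    simp [hc, hsum, hs, hb]

end AddValuation

section OrderedGroupValued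

variable {R Γ : Type*} [Ring R] [AddCommGroup Γ] {v : R → Γ}

theorem val_one [Nontrivial R]
    (hmul : ∀ x y : R, x ≠ 0 → y ≠ 0 → v (x * y) = v x + v y) : v 1 = 0 := by
  simpa using hmul 1 1 one_ne_zero one_ne_zero

theorem val_pow [IsDomain R]
    (hmul : ∀ x y : R, x ≠ 0 → y ≠ 0 → v (x * y) = v x + v y)
    {x : R} (hx : x ≠ 0) (m : ℕ) : v (x ^ m) = m • v x := by
  induction m with
  | zero => simp [val_one hmul]
  | succ m ih => rw [pow_succ, hmul _ _ (pow_ne_zero m hx) hx, ih, succ_nsmul]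

variable [LinearOrder Γ] [IsOrderedAddMonoid Γ]

theorem exists_addValuation_eq_coe [IsDomain R]
    (hmul : ∀ x y : R, x ≠ 0 → y ≠ 0 → v (x * y) = v x + v y)
    (hadd : ∀ x y : R, x ≠ 0 → y ≠ 0 → x + y ≠ 0 → min (v x) (v y) ≤ v (x + y)) :
    ∃ w : AddValuation R (WithTop Γ), ∀ x, x ≠ 0 → w x = v x := by
  classical
  let f : R → WithTop Γ := fun x ↦ if x = 0 then ⊤ else v x
  have f_zero : f 0 = ⊤ := if_pos rfl
  have f_of_ne {x : R} (hx : x ≠ 0) : f x = v x := if_neg hx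
  have f_add (x y : R) : min (f x) (f y) ≤ f (x + y) := by
    rcases eq_or_ne x 0 with rfl | hx
    · simp
    rcases eq_or_ne y 0 with rfl | hy
    · simp
    rcases eq_or_ne (x + y) 0 with hxy | hxy
    · simp [hxy, f_zero]
    rw [f_of_ne hx, f_of_ne hy, f_of_ne hxy]
    exact_mod_cast hadd x y hx hy hxy
  have f_mul (x y : R) : f (x * y) = f x + f y := by
    rcases eq_or_ne x 0 with rfl | hx
    · simp [f_zero]
    rcases eq_or_ne y 0 with rfl | hy
    · simp [f_zero]
    rw [f_of_ne hx, f_of_ne hy, f_of_ne (mul_ne_zero hx hy), hmul x y hx hy, WithTop.coe_add]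
  have f_one : f 1 = 0 := by rw [f_of_ne one_ne_zero, val_one hmul, WithTop.coe_zero]
  exact ⟨.of f f_zero f_one f_add f_mul, fun x ↦ f_of_ne⟩

theorem ne_zero_and_val_eq_zero_iff {w : AddValuation R (WithTop Γ)}
    (hw : ∀ x, x ≠ 0 → w x = v x) (x : R) : x ≠ 0 ∧ v x = 0 ↔ w x = 0 := by
  rcases eq_or_ne x 0 with rfl | hx
  · simp
  · rw [hw x hx, WithTop.coe_eq_zero, and_iff_right hx]

end OrderedGroupValued

section

variable {F : Type*} [Field F] {v : F → ℤ} {w : AddValuation F (WithTop ℤ)}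

theorem inP_iff_le (hw : ∀ x, x ≠ 0 → w x = v x) (r : ℕ) (x : F) :
    InP v r x ↔ ((r : ℤ) : WithTop ℤ) ≤ w x := by
  rcases eq_or_ne x 0 with rfl | hx
  · simp [InP]
  · rw [InP, hw x hx, WithTop.coe_le_coe, or_iff_right hx]

theorem inO_iff_nonneg (hw : ∀ x, x ≠ 0 → w x = v x) (x : F) : InO v x ↔ 0 ≤ w x := by
  simpa [InO, InP] using inP_iff_le hw 0 x

theorem inK0upper_iff (hw : ∀ x, x ≠ 0 → w x = v x) (r : ℕ) (k : Matrix (Fin 2) (Fin 2) F) :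
    InK0upper v r k ↔
      ((∀ i j, 0 ≤ w (k i j)) ∧ w k.det = 0) ∧ ((r : ℤ) : WithTop ℤ) ≤ w (k 0 1) := by
  simp only [InK0upper, InK, inO_iff_nonneg hw, ne_zero_and_val_eq_zero_iff hw, inP_iff_le hw]

theorem inK0upper_smul_iff (hw : ∀ x, x ≠ 0 → w x = v x) (r : ℕ) (c s b : F) :
    InK0upper v r (c • !![-s, b; -1, -1]) ↔
      w c = 0 ∧ w (s + b) = 0 ∧ InO v s ∧ InP v r b := by
  have w_upper : w ((c • !![-s, b; -1, -1]) 0 1) = w c + w b := by simp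
  rw [inK0upper_iff hw, nonneg_entries_and_det_eq_zero_iff, w_upper, inO_iff_nonneg hw,
    inP_iff_le hw]
  constructor
  · rintro ⟨⟨hc, hsum, hs, -⟩, hb⟩
    exact ⟨hc, hsum, hs, by rwa [hc, zero_add] at hb⟩
  · rintro ⟨hc, hsum, hs, hb⟩
    have hb_nonneg : 0 ≤ w b := le_trans (by exact_mod_cast r.cast_nonneg) hb
    exact ⟨⟨hc, hsum, hs, hb_nonneg⟩, by rwa [hc, zero_add]⟩

theorem isUnit_aMat {t : F} (ht : t ≠ 0) : IsUnit (aMat t) := by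
  rw [isUnit_iff_isUnit_det, aMat, det_fin_two_of]
  simpa using ht

theorem zMat_mul_nMat_mul_aMat_mul_wMat_mul_nMat_inv {t : F} (ht : t ≠ 0) (u x y : F) :
    zMat u * nMat x * aMat y * wMat * nMat t⁻¹ =
      aMat t⁻¹ * ((u / t) • !![-(t * x), t ^ 2 * y - t * x; -1, -1]) * aMat t := by
  simp only [zMat, nMat, aMat, wMat, smul_of, smul_cons, smul_empty, smul_eq_mul, mul_fin_two,
    mul_zero, zero_mul, mul_one, one_mul, add_zero, zero_add]
  simp only [← Matrix.ext_iff, Fin.forall_fin_two, of_apply, cons_val_zero, cons_val_one,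
    cons_val', cons_val_fin_one]
  refine ⟨⟨?_, ?_⟩, ?_, ?_⟩ <;> field_simp
  ring

/-- Here `t` plays the role of `ϖ ^ n₁` and `r` that of `n₁ - n₀`. -/
theorem stmt_10_general (hmul : ∀ x y : F, x ≠ 0 → y ≠ 0 → v (x * y) = v x + v y)
    (hadd : ∀ x y : F, x ≠ 0 → y ≠ 0 → x + y ≠ 0 → min (v x) (v y) ≤ v (x + y))
    (r : ℕ) {t u y : F} (ht : t ≠ 0) (hu : u ≠ 0) (hy : y ≠ 0) (x : F) :
    (∃ k, InK0upper v r k ∧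
        zMat u * nMat x * aMat y * wMat * nMat t⁻¹ = aMat t⁻¹ * k * aMat t) ↔
      v u = v t ∧ v y = -(2 * v t) ∧ InO v (t * x) ∧ InP v r (t ^ 2 * y - t * x) := by
  obtain ⟨w, hw⟩ := exists_addValuation_eq_coe hmul hadd
  have w_div : w (u / t) = 0 ↔ v u = v t := by
    have hut : u / t ≠ 0 := div_ne_zero hu ht
    have hvu : v u = v (u / t) + v t := by rw [← hmul _ _ hut ht, div_mul_cancel₀ u ht]
    rw [← ne_zero_and_val_eq_zero_iff hw, and_iff_right hut]
    omega
  have w_sq_mul : w (t ^ 2 * y) = 0 ↔ v y = -(2 * v t) := by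
    have ht2 : t ^ 2 ≠ 0 := pow_ne_zero 2 ht
    rw [← ne_zero_and_val_eq_zero_iff hw, and_iff_right (mul_ne_zero ht2 hy),
      hmul _ _ ht2 hy, val_pow hmul ht, two_nsmul]
    omega
  simp only [zMat_mul_nMat_mul_aMat_mul_wMat_mul_nMat_inv ht, (isUnit_aMat ht).mul_left_inj,
    (isUnit_aMat (inv_ne_zero ht)).mul_right_inj, exists_eq_right', inK0upper_smul_iff hw,
    add_sub_cancel, w_div, w_sq_mul]

end

/-- Characterization of when `z(u)n(x)a(y)·w·n(ϖ^{−n₁})` lies in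
`a(ϖ^{−n₁})·K⁰·a(ϖ^{n₁})`, where `K⁰ = K^0(𝔭^{n₁−n₀})`. -/
theorem stmt_10 {F : Type*} [Field F] [CharZero F] (v : F → ℤ)
    (hmul : ∀ x y : F, x ≠ 0 → y ≠ 0 → v (x * y) = v x + v y)
    (hadd : ∀ x y : F, x ≠ 0 → y ≠ 0 → x + y ≠ 0 → min (v x) (v y) ≤ v (x + y))
    (ϖ : F) (hϖ0 : ϖ ≠ 0) (hϖ : v ϖ = 1)
    (n n₁ n₀ : ℕ) (hn : 1 ≤ n) (hn₁ : n₁ = (n + 1) / 2) (hn₀ : n₀ = n / 2)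
    (u y : F) (hu : u ≠ 0) (hy : y ≠ 0) (x : F) :
    (∃ k : Matrix (Fin 2) (Fin 2) F, InK0upper v (n₁ - n₀) k ∧
        zMat u * nMat x * aMat y * wMat * nMat (ϖ ^ (-(n₁ : ℤ)))
          = aMat (ϖ ^ (-(n₁ : ℤ))) * k * aMat (ϖ ^ (n₁ : ℤ)))
      ↔ (v u = (n₁ : ℤ) ∧ v y = -(2 * (n₁ : ℤ)) ∧ InO v (ϖ ^ n₁ * x) ∧
          InP v (n₁ - n₀) (ϖ ^ (2 * n₁) * y - ϖ ^ n₁ * x)) := by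
  simpa only [_root_.zpow_neg, _root_.zpow_natCast, pow_mul', val_pow hmul hϖ0, hϖ, nsmul_one]
    using stmt_10_general hmul hadd (n₁ - n₀) (pow_ne_zero n₁ hϖ0) hu hy x
end

section
/- Let N ≥ 1 be an integer, let N₀ᵍ ≥ 1 and Qᵍ ≥ 1 be integers, let T ≥ 1, y > 0, B ≥ 0 be reals, and let a : ℤ≥1 → ℝ≥0 be a function with the following property: for every positive integer n₁ with n₁ | N^∞ and every integer r ≥ 0, Σ_{rN₀ᵍ ≤ n₀ < (r+1)N₀ᵍ, gcd(n₀, N) = 1} a(n₀·n₁)² ≤ B · N₀ᵍ · n₁^{−1/2}. Then for every ε > 0 there is a constant C depending only on ε and B such that Σ_{n ≥ 1, 2πny/Qᵍ ≤ 2T} a(n)² · min( T^{1/3}, |2πny/(QᵍT) − 1|^{−1/2} ) ≤ C · (NT)^ε · ( N₀ᵍ · T^{1/3} + Qᵍ·T/y ). -/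
/-- `n₁ ∣ N^∞`: every prime factor of `n₁` divides `N`. -/
def DvdInfty (n₁ N : ℕ) : Prop := ∀ p : ℕ, p.Prime → p ∣ n₁ → p ∣ N

/-!
Split `n = n₀ n₁` with `n₀` coprime to `N` and `n₁ ∣ N^∞`. An interval of radius `ρ` in `n` is an
interval of radius `ρ / n₁` in `n₀`, which meets at most `2ρ / (n₁ L) + 2` blocks of length `L`, so
the hypothesis bounds the mass of the interval by `B ∑ n₁^{-σ} (2ρ + 2L)`. By the Euler product the
sum over `n₁` is at most `K^{ω(N)}` for a constant `K`, hence `O(N^ε)`. Finally, cut the weight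
dyadically: `min(m, |n / X - 1|^{-α})` exceeds `2^k` only within distance `X 2^{-k/α}` of `X`, and
for `α < 1` the main terms form a convergent geometric series, while the block terms `2^k L` stop
at `2^k ≤ m`.
-/

open Finset

lemma exists_eq_mul_coprime_dvdInfty (N : ℕ) {n : ℕ} (hn : n ≠ 0) :
    ∃ n₀ n₁ : ℕ, n = n₀ * n₁ ∧ n₀.Coprime N ∧ DvdInfty n₁ N := by
  induction n using induction_on_primes with
  | zero => exact absurd rfl hn
  | one =>
    exact ⟨1, 1, rfl, Nat.coprime_one_left N, fun p hp h => absurd (Nat.dvd_one.mp h) hp.ne_one⟩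
  | prime_mul p b hp ih =>
    obtain ⟨n₀, n₁, rfl, hcop, hdvd⟩ := ih (right_ne_zero_of_mul hn)
    by_cases hpN : p ∣ N
    · refine ⟨n₀, p * n₁, by ring, hcop, fun q hq hqd => ?_⟩
      rcases hq.dvd_mul.mp hqd with h | h
      · rwa [(Nat.prime_dvd_prime_iff_eq hq hp).mp h]
      · exact hdvd q hq h
    · exact ⟨p * n₀, n₁, by ring, ((hp.coprime_iff_not_dvd).mpr hpN).mul_left hcop, hdvd⟩

open Classical in
lemma sum_le_sum_dvdInfty_sum_coprime (N : ℕ) {M : ℕ} {s : Finset ℕ} (hs : s ⊆ Icc 1 M)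
    {f : ℕ → ℝ} (hf : ∀ n, 0 ≤ f n) :
    ∑ n ∈ s, f n ≤ ∑ n₁ ∈ Icc 1 M with DvdInfty n₁ N,
      ∑ n₀ ∈ Icc 1 M with n₀.Coprime N ∧ n₀ * n₁ ∈ s, f (n₀ * n₁) := by
  rw [sum_sigma']
  refine (sum_le_sum_of_subset_of_nonneg (fun n hn => ?_) fun _ _ _ => hf _).trans
    (sum_image_le_of_nonneg (g := fun x : (_ : ℕ) × ℕ => x.2 * x.1) fun _ _ => hf _)
  obtain ⟨hn_one, hn_le⟩ := mem_Icc.mp (hs hn)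
  obtain ⟨n₀, n₁, rfl, hcop, hdvd⟩ :=
    exists_eq_mul_coprime_dvdInfty N (Nat.one_le_iff_ne_zero.mp hn_one)
  have hn₀ : 0 < n₀ := Nat.pos_of_mul_pos_right hn_one
  have hn₁ : 0 < n₁ := Nat.pos_of_mul_pos_left hn_one
  refine mem_image.mpr ⟨⟨n₁, n₀⟩, ?_, rfl⟩
  simp only [mem_sigma, mem_filter, mem_Icc]
  exact ⟨⟨⟨hn₁, (Nat.le_mul_of_pos_left n₁ hn₀).trans hn_le⟩, hdvd⟩,
    ⟨hn₀, (Nat.le_mul_of_pos_right n₀ hn₁).trans hn_le⟩, hcop, hn⟩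

section Blocks

variable {L : ℕ} {c ρ : ℝ} {s : Finset ℕ}

lemma card_image_div_le (hL : L ≠ 0) (hρ : 0 ≤ ρ) (hs : ∀ n ∈ s, |(n : ℝ) - c| ≤ ρ) :
    (#(s.image (· / L)) : ℝ) ≤ 2 * ρ / L + 2 := by
  rcases s.eq_empty_or_nonempty with rfl | ⟨n, hn⟩
  · simp only [image_empty, card_empty, Nat.cast_zero]
    positivity
  have bounds : ∀ n ∈ s, c - ρ ≤ n ∧ (n : ℝ) ≤ c + ρ := fun n hn => by
    have := abs_le.mp (hs n hn)
    constructor <;> linarith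
  have hhi : 0 ≤ c + ρ := n.cast_nonneg.trans (bounds n hn).2
  set lo := ⌊(c - ρ) / L⌋₊
  set hi := ⌊(c + ρ) / L⌋₊
  have hlohi : lo ≤ hi := Nat.floor_le_floor (by gcongr; linarith)
  have hsub : s.image (· / L) ⊆ Icc lo hi := by
    refine image_subset_iff.mpr fun n hn => ?_
    rw [← Nat.floor_div_eq_div (K := ℝ) n L]
    exact mem_Icc.mpr ⟨Nat.floor_le_floor (by gcongr; exact (bounds n hn).1),
      Nat.floor_le_floor (by gcongr; exact (bounds n hn).2)⟩
  calc (#(s.image (· / L)) : ℝ) ≤ #(Icc lo hi) := by exact_mod_cast card_le_card hsub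
    _ = hi + 1 - lo := by
        rw [Nat.card_Icc, Nat.cast_sub (by lia)]
        push_cast
        rfl
    _ ≤ (c + ρ) / L + 1 - ((c - ρ) / L - 1) := by
        have : (hi : ℝ) ≤ (c + ρ) / L := Nat.floor_le (by positivity)
        have : (c - ρ) / L < lo + 1 := Nat.lt_floor_add_one _
        linarith
    _ = 2 * ρ / L + 2 := by ring

lemma sum_le_of_sum_fiber_div_le {D : ℝ} {w : ℕ → ℝ} (hL : L ≠ 0) (hρ : 0 ≤ ρ)
    (hs : ∀ n ∈ s, |(n : ℝ) - c| ≤ ρ) (hD : 0 ≤ D)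
    (hw : ∀ r, ∑ n ∈ s with n / L = r, w n ≤ D) :
    ∑ n ∈ s, w n ≤ (2 * ρ / L + 2) * D := by
  rw [← sum_fiberwise_of_maps_to fun n hn => mem_image_of_mem (· / L) hn]
  refine (sum_le_card_nsmul _ _ D fun r _ => hw r).trans ?_
  rw [nsmul_eq_mul]
  gcongr
  exact card_image_div_le hL hρ hs

end Blocks

/-- The Ramanujan bound on average for the weights `w = a²`: for every `n₁ ∣ N^∞`, the `n₀` coprime
to `N` in any block `[rL, (r+1)L)` satisfy `∑ w(n₀ n₁) ≤ B L n₁^{-σ}`. -/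
def RamanujanOnAverage (N L : ℕ) (B σ : ℝ) (w : ℕ → ℝ) : Prop :=
  ∀ n₁ : ℕ, 1 ≤ n₁ → DvdInfty n₁ N → ∀ r : ℕ,
    ∑ n₀ ∈ (Ico (r * L) ((r + 1) * L)).filter (Nat.Coprime · N), w (n₀ * n₁)
      ≤ B * L * (n₁ : ℝ) ^ (-σ)

namespace RamanujanOnAverage

variable {N L : ℕ} {B σ c ρ : ℝ} {w : ℕ → ℝ}

lemma sum_coprime_le (h : RamanujanOnAverage N L B σ w) (hL : L ≠ 0) (hB : 0 ≤ B)
    (hw : ∀ n, 0 ≤ w n) (hρ : 0 ≤ ρ) {n₁ : ℕ} (hn₁ : 1 ≤ n₁) (hdvd : DvdInfty n₁ N)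
    {s : Finset ℕ} (hs : ∀ n₀ ∈ s, n₀.Coprime N ∧ |((n₀ * n₁ : ℕ) : ℝ) - c| ≤ ρ) :
    ∑ n₀ ∈ s, w (n₀ * n₁) ≤ B * (n₁ : ℝ) ^ (-σ) * (2 * ρ + 2 * L) := by
  have hn₁' : (1 : ℝ) ≤ n₁ := by exact_mod_cast hn₁
  have hdist : ∀ n₀ ∈ s, |(n₀ : ℝ) - c / n₁| ≤ ρ / n₁ := fun n₀ hn₀ => by
    have hscale : (n₀ : ℝ) - c / n₁ = ((n₀ * n₁ : ℕ) - c) / n₁ := by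
      push_cast
      field_simp
    rw [hscale, abs_div, Nat.abs_cast]
    gcongr
    exact (hs n₀ hn₀).2
  have hblock : ∀ r, ∑ n₀ ∈ s with n₀ / L = r, w (n₀ * n₁) ≤ B * L * (n₁ : ℝ) ^ (-σ) := by
    refine fun r => (sum_le_sum_of_subset_of_nonneg (fun n₀ hn₀ => ?_) fun _ _ _ => hw _).trans
      (h n₁ hn₁ hdvd r)
    obtain ⟨hmem, rfl⟩ := mem_filter.mp hn₀
    exact mem_filter.mpr ⟨mem_Ico.mpr ⟨Nat.div_mul_le_self n₀ L,
      by linarith [Nat.lt_div_mul_add (a := n₀) (Nat.pos_of_ne_zero hL)]⟩, (hs n₀ hmem).1⟩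
  calc ∑ n₀ ∈ s, w (n₀ * n₁)
      ≤ (2 * (ρ / n₁) / L + 2) * (B * L * (n₁ : ℝ) ^ (-σ)) :=
        sum_le_of_sum_fiber_div_le hL (by positivity) hdist (by positivity) hblock
    _ = B * (n₁ : ℝ) ^ (-σ) * (2 * (ρ / n₁) + 2 * L) := by field_simp
    _ ≤ B * (n₁ : ℝ) ^ (-σ) * (2 * ρ + 2 * L) := by
        gcongr
        exact div_le_self hρ hn₁'

open Classical in
lemma sum_le (h : RamanujanOnAverage N L B σ w) (hL : L ≠ 0) (hB : 0 ≤ B) (hw : ∀ n, 0 ≤ w n)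
    (hρ : 0 ≤ ρ) {M : ℕ} {s : Finset ℕ} (hsM : s ⊆ Icc 1 M)
    (hs : ∀ n ∈ s, |(n : ℝ) - c| ≤ ρ) :
    ∑ n ∈ s, w n
      ≤ B * (∑ n₁ ∈ Icc 1 M with DvdInfty n₁ N, (n₁ : ℝ) ^ (-σ)) * (2 * ρ + 2 * L) := by
  refine (sum_le_sum_dvdInfty_sum_coprime N hsM hw).trans ?_
  rw [mul_sum, sum_mul]
  refine sum_le_sum fun n₁ hn₁ => ?_
  obtain ⟨hn₁M, hdvd⟩ := mem_filter.mp hn₁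
  refine h.sum_coprime_le hL hB hw hρ (mem_Icc.mp hn₁M).1 hdvd (c := c) fun n₀ hn₀ => ?_
  obtain ⟨-, hcop, hmem⟩ := mem_filter.mp hn₀
  exact ⟨hcop, hs _ hmem⟩

end RamanujanOnAverage

lemma prod_primeFactors_rpow_le {ε : ℝ} (hε : 0 ≤ ε) {N : ℕ} (hN : N ≠ 0) :
    ∏ p ∈ N.primeFactors, (p : ℝ) ^ ε ≤ (N : ℝ) ^ ε := by
  rw [Real.finsetProd_rpow _ _ fun _ _ => by positivity, ← Nat.cast_prod]
  gcongr
  exact Nat.le_of_dvd (Nat.pos_of_ne_zero hN) (Nat.prod_primeFactors_dvd N)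

lemma exists_pow_card_primeFactors_le {ε K : ℝ} (hε : 0 < ε) (hK : 1 ≤ K) :
    ∃ C : ℝ, 0 < C ∧ ∀ N : ℕ, N ≠ 0 → K ^ #N.primeFactors ≤ C * (N : ℝ) ^ ε := by
  -- Only the primes `p < P` fail to satisfy `K ≤ p ^ ε`.
  set P := ⌈K ^ ε⁻¹⌉₊
  refine ⟨K ^ P, by positivity, fun N hN => ?_⟩
  have hfactor : ∀ p ∈ N.primeFactors, K ≤ (if p < P then K else 1) * (p : ℝ) ^ ε := by
    intro p hp
    have hp_one : (1 : ℝ) ≤ p := by exact_mod_cast (Nat.prime_of_mem_primeFactors hp).one_le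
    split_ifs with hpP
    · exact le_mul_of_one_le_right (by positivity) (Real.one_le_rpow hp_one hε.le)
    · rw [one_mul, ← Real.rpow_inv_le_iff_of_pos (by positivity) (by positivity) hε]
      exact (Nat.le_ceil _).trans (by exact_mod_cast not_lt.mp hpP)
  have hsmall : ∏ p ∈ N.primeFactors, (if p < P then K else 1) ≤ K ^ P := by
    rw [← prod_filter, prod_const]
    refine pow_le_pow_right₀ hK ((card_le_card fun p hp => ?_).trans (card_range P).le)
    exact mem_range.mpr (mem_filter.mp hp).2
  calc K ^ #N.primeFactors = ∏ _p ∈ N.primeFactors, K := (prod_const K).symm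
    _ ≤ ∏ p ∈ N.primeFactors, (if p < P then K else 1) * (p : ℝ) ^ ε :=
        prod_le_prod (fun _ _ => by positivity) hfactor
    _ ≤ K ^ P * (N : ℝ) ^ ε := by
        rw [prod_mul_distrib]
        gcongr
        exact prod_primeFactors_rpow_le hε.le hN

lemma DvdInfty.mem_factoredNumbers {n N : ℕ} (h : DvdInfty n N) (hN : N ≠ 0) :
    n ∈ Nat.factoredNumbers N.primeFactors :=
  Nat.mem_factoredNumbers'.mpr fun p hp hpn => Nat.mem_primeFactors.mpr ⟨hp, h p hp hpn, hN⟩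

/-- The completely multiplicative function `n ↦ n ^ s`, in the form Euler products require. -/
noncomputable def natRpowHom (s : ℝ) : ℕ →* ℝ where
  toFun n := (n : ℝ) ^ s
  map_one' := by simp
  map_mul' m n := by rw [Nat.cast_mul, Real.mul_rpow m.cast_nonneg n.cast_nonneg]

lemma sum_dvdInfty_rpow_neg_le_prod {σ : ℝ} (hσ : 0 < σ) {N : ℕ} (hN : N ≠ 0) {s : Finset ℕ}
    (hs : ∀ n ∈ s, DvdInfty n N) :
    ∑ n ∈ s, (n : ℝ) ^ (-σ) ≤ ∏ p ∈ N.primeFactors, (1 - (p : ℝ) ^ (-σ))⁻¹ := by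
  have hnorm {p : ℕ} (hp : p.Prime) : ‖natRpowHom (-σ) p‖ < 1 := by
    change ‖(p : ℝ) ^ (-σ)‖ < 1
    rw [Real.norm_of_nonneg (by positivity)]
    exact Real.rpow_lt_one_of_one_lt_of_neg (by exact_mod_cast hp.one_lt) (by linarith)
  have hsum := (EulerProduct.summable_and_hasSum_factoredNumbers_prod_filter_prime_geometric
    hnorm N.primeFactors).2
  rw [filter_true_of_mem fun p hp => Nat.prime_of_mem_primeFactors hp] at hsum
  rw [← sum_subtype_of_mem (fun n : ℕ => (n : ℝ) ^ (-σ))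
    fun n hn => (hs n hn).mem_factoredNumbers hN]
  exact sum_le_hasSum _ (fun n _ => Real.rpow_nonneg (Nat.cast_nonneg _) _) hsum

lemma exists_sum_dvdInfty_rpow_neg_le {ε σ : ℝ} (hε : 0 < ε) (hσ : 0 < σ) :
    ∃ C : ℝ, 0 < C ∧ ∀ N : ℕ, N ≠ 0 → ∀ s : Finset ℕ, (∀ n ∈ s, DvdInfty n N) →
      ∑ n ∈ s, (n : ℝ) ^ (-σ) ≤ C * (N : ℝ) ^ ε := by
  have htwo : (2 : ℝ) ^ (-σ) < 1 :=
    Real.rpow_lt_one_of_one_lt_of_neg one_lt_two (neg_lt_zero.mpr hσ)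
  have hK : 1 ≤ (1 - (2 : ℝ) ^ (-σ))⁻¹ :=
    (one_le_inv₀ (sub_pos.mpr htwo)).mpr (sub_le_self 1 (by positivity))
  obtain ⟨C, hC, hbound⟩ := exists_pow_card_primeFactors_le hε hK
  refine ⟨C, hC, fun N hN s hs => ?_⟩
  have hp_le : ∀ p ∈ N.primeFactors, (p : ℝ) ^ (-σ) ≤ 2 ^ (-σ) := fun p hp =>
    Real.rpow_le_rpow_of_nonpos two_pos
      (by exact_mod_cast (Nat.prime_of_mem_primeFactors hp).two_le) (neg_nonpos.mpr hσ.le)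
  calc ∑ n ∈ s, (n : ℝ) ^ (-σ)
      ≤ ∏ p ∈ N.primeFactors, (1 - (p : ℝ) ^ (-σ))⁻¹ := sum_dvdInfty_rpow_neg_le_prod hσ hN hs
    _ ≤ ∏ _p ∈ N.primeFactors, (1 - (2 : ℝ) ^ (-σ))⁻¹ :=
        prod_le_prod (fun p hp => inv_nonneg.mpr (by linarith [hp_le p hp])) fun p hp =>
          inv_anti₀ (sub_pos.mpr htwo) (by linarith [hp_le p hp])
    _ = (1 - (2 : ℝ) ^ (-σ))⁻¹ ^ #N.primeFactors := prod_const _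
    _ ≤ C * (N : ℝ) ^ ε := hbound N hN

lemma le_two_mul_sum_two_pow {v : ℝ} (hv : 1 ≤ v) {K : ℕ} (hvK : v < 2 ^ (K + 1)) :
    v ≤ 2 * ∑ k ∈ range (K + 1) with (2 : ℝ) ^ k ≤ v, (2 : ℝ) ^ k := by
  obtain ⟨j, hjv, hvj⟩ := exists_nat_pow_near hv one_lt_two
  have hjK : j < K + 1 := (pow_lt_pow_iff_right₀ one_lt_two).mp (hjv.trans_lt hvK)
  calc v ≤ 2 * 2 ^ j := by linarith [pow_succ (2 : ℝ) j]
    _ ≤ _ := by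
        gcongr
        exact single_le_sum (f := fun k => (2 : ℝ) ^ k) (fun k _ => by positivity)
          (mem_filter.mpr ⟨mem_range.mpr hjK, hjv⟩)

section LayerCake

variable {ι : Type*} {s : Finset ι} {w φ : ι → ℝ}

lemma sum_mul_le_sum_two_pow_mul_sum {K : ℕ} (hw : ∀ i ∈ s, 0 ≤ w i) (hφ : ∀ i ∈ s, 1 ≤ φ i)
    (hφK : ∀ i ∈ s, φ i < 2 ^ (K + 1)) :
    ∑ i ∈ s, w i * φ i
      ≤ 2 * ∑ k ∈ range (K + 1), (2 : ℝ) ^ k * ∑ i ∈ s with (2 : ℝ) ^ k ≤ φ i, w i := by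
  calc ∑ i ∈ s, w i * φ i
      ≤ ∑ i ∈ s, w i * (2 * ∑ k ∈ range (K + 1) with (2 : ℝ) ^ k ≤ φ i, (2 : ℝ) ^ k) :=
        sum_le_sum fun i hi => mul_le_mul_of_nonneg_left
          (le_two_mul_sum_two_pow (hφ i hi) (hφK i hi)) (hw i hi)
    _ = 2 * ∑ k ∈ range (K + 1), (2 : ℝ) ^ k * ∑ i ∈ s with (2 : ℝ) ^ k ≤ φ i, w i := by
        simp only [sum_filter, mul_sum, mul_ite, mul_zero]
        rw [sum_comm]
        refine sum_congr rfl fun k _ => sum_congr rfl fun i _ => ?_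
        split_ifs <;> ring

lemma sum_mul_le_of_sum_superlevel_le {m A D q : ℝ} (hw : ∀ i ∈ s, 0 ≤ w i)
    (hφ : ∀ i ∈ s, 1 ≤ φ i) (hφm : ∀ i ∈ s, φ i ≤ m) (hm : 1 ≤ m) (hA : 0 ≤ A) (hD : 0 ≤ D)
    (hq : 0 < q) (hq' : q < 1 / 2)
    (h : ∀ k : ℕ, ∑ i ∈ s with (2 : ℝ) ^ k ≤ φ i, w i ≤ A * q ^ k + D) :
    ∑ i ∈ s, w i * φ i ≤ 2 * A * (1 - 2 * q)⁻¹ + 4 * D * m := by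
  obtain ⟨K, hKm, hmK⟩ := exists_nat_pow_near hm one_lt_two
  have hmain : ∑ k ∈ range (K + 1), (2 * q) ^ k ≤ (1 - 2 * q)⁻¹ :=
    
    sum_le_hasSum _ (fun _ _ => by positivity)
      (hasSum_geometric_of_lt_one (by positivity) (by linarith))
  have hblocks : ∑ k ∈ range (K + 1), (2 : ℝ) ^ k ≤ 2 * m := by
    rw [geom_sum_eq (by norm_num), pow_succ]
    linarith
  calc ∑ i ∈ s, w i * φ i
      ≤ 2 * ∑ k ∈ range (K + 1), (2 : ℝ) ^ k * ∑ i ∈ s with (2 : ℝ) ^ k ≤ φ i, w i :=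
        sum_mul_le_sum_two_pow_mul_sum hw hφ fun i hi => (hφm i hi).trans_lt hmK
    _ ≤ 2 * ∑ k ∈ range (K + 1), (2 : ℝ) ^ k * (A * q ^ k + D) := by
        gcongr with k
        exact h k
    _ = 2 * A * ∑ k ∈ range (K + 1), (2 * q) ^ k + 2 * D * ∑ k ∈ range (K + 1), (2 : ℝ) ^ k := by
        simp only [mul_sum, ← sum_add_distrib]
        exact sum_congr rfl fun k _ => by ring
    _ ≤ 2 * A * (1 - 2 * q)⁻¹ + 2 * D * (2 * m) := by gcongr
    _ = 2 * A * (1 - 2 * q)⁻¹ + 4 * D * m := by ring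

end LayerCake

/-- The weight `min(m, |u|^{-α})`, read as `m` at `u = 0`, where Lean has `0 ^ (-α) = 0`. -/
noncomputable def truncatedRpow (m α u : ℝ) : ℝ :=
  if u = 0 then m else min m (|u| ^ (-α))

section TruncatedRpow

variable {m α u : ℝ}

lemma truncatedRpow_le : truncatedRpow m α u ≤ m := by
  unfold truncatedRpow
  split_ifs
  · exact le_rfl
  · exact min_le_left _ _

lemma one_le_truncatedRpow (hm : 1 ≤ m) (hα : 0 ≤ α) (hu : |u| ≤ 1) : 1 ≤ truncatedRpow m α u := by
  unfold truncatedRpow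
  split_ifs with hu₀
  · exact hm
  · exact le_min hm (Real.one_le_rpow_of_pos_of_le_one_of_nonpos (abs_pos.mpr hu₀) hu
      (neg_nonpos.mpr hα))

lemma abs_le_of_two_pow_le_truncatedRpow (hα : 0 < α) {k : ℕ}
    (h : (2 : ℝ) ^ k ≤ truncatedRpow m α u) : |u| ≤ ((2 : ℝ) ^ (-α)⁻¹) ^ k := by
  unfold truncatedRpow at h
  split_ifs at h with hu
  · rw [hu, abs_zero]
    positivity
  · rw [Real.rpow_pow_comm zero_le_two,
      Real.le_rpow_inv_iff_of_neg (abs_pos.mpr hu) (by positivity) (neg_lt_zero.mpr hα)]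
    exact h.trans (min_le_right _ _)

end TruncatedRpow

lemma two_rpow_inv_neg_lt_half {α : ℝ} (hα₀ : 0 < α) (hα₁ : α < 1) :
    (2 : ℝ) ^ (-α)⁻¹ < 1 / 2 := by
  rw [one_div, ← Real.rpow_neg_one 2, Real.rpow_lt_rpow_left_iff one_lt_two, inv_neg,
    neg_lt_neg_iff]
  exact (one_lt_inv₀ hα₀).mpr hα₁

lemma abs_div_sub_one_le_one_of_mem {X : ℝ} (hX : 0 < X) {n : ℕ} (hn : n ∈ Icc 1 ⌊2 * X⌋₊) :
    |(n : ℝ) / X - 1| ≤ 1 := by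
  have hn_le : (n : ℝ) ≤ 2 * X := (Nat.le_floor_iff (by positivity)).mp (mem_Icc.mp hn).2
  have : (n : ℝ) / X ≤ 2 := (div_le_iff₀ hX).mpr hn_le
  have : 0 ≤ (n : ℝ) / X := by positivity
  exact abs_le.mpr ⟨by linarith, by linarith⟩

namespace RamanujanOnAverage

open Classical in
lemma sum_superlevel_truncatedRpow_le {N L : ℕ} {B σ α X : ℝ} {w : ℕ → ℝ}
    (h : RamanujanOnAverage N L B σ w) (hL : L ≠ 0) (hB : 0 ≤ B) (hw : ∀ n, 0 ≤ w n) (hα : 0 < α)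
    (hX : 0 < X) (m : ℝ) (M k : ℕ) :
    ∑ n ∈ (Icc 1 M).filter fun n : ℕ => (2 : ℝ) ^ k ≤ truncatedRpow m α (n / X - 1), w n
      ≤ B * (∑ n₁ ∈ Icc 1 M with DvdInfty n₁ N, (n₁ : ℝ) ^ (-σ))
        * (2 * (X * ((2 : ℝ) ^ (-α)⁻¹) ^ k) + 2 * L) := by
  refine h.sum_le hL hB hw (c := X) (by positivity) (filter_subset _ _) fun n hn => ?_
  calc |(n : ℝ) - X| = |X * (n / X - 1)| := by
        congr 1
        field_simp
    _ = X * |n / X - 1| := by rw [abs_mul, abs_of_pos hX]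
    _ ≤ X * ((2 : ℝ) ^ (-α)⁻¹) ^ k := by
        gcongr
        exact abs_le_of_two_pow_le_truncatedRpow hα (mem_filter.mp hn).2

lemma exists_sum_mul_truncatedRpow_le {ε α σ : ℝ} (hε : 0 < ε) (hα₀ : 0 < α) (hα₁ : α < 1)
    (hσ : 0 < σ) :
    ∃ C : ℝ, 0 < C ∧ ∀ (N L : ℕ) (B m X : ℝ) (w : ℕ → ℝ), N ≠ 0 → L ≠ 0 → 0 ≤ B → 1 ≤ m →
      0 < X → (∀ n, 0 ≤ w n) → RamanujanOnAverage N L B σ w →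
      ∑ n ∈ Icc 1 ⌊2 * X⌋₊, w n * truncatedRpow m α (n / X - 1)
        ≤ C * B * (N : ℝ) ^ ε * (L * m + X) := by
  classical
  obtain ⟨Z, hZ, hZN⟩ := exists_sum_dvdInfty_rpow_neg_le hε hσ
  set q : ℝ := 2 ^ (-α)⁻¹
  have hq : 0 < q := by positivity
  have hq_half : q < 1 / 2 := two_rpow_inv_neg_lt_half hα₀ hα₁
  have hgeom : 0 < (1 - 2 * q)⁻¹ := inv_pos.mpr (by linarith)
  refine ⟨Z * (4 * (1 - 2 * q)⁻¹ + 8), by positivity, ?_⟩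
  intro N L B m X w hN hL hB hm hX hw hRam
  set S := ∑ n₁ ∈ Icc 1 ⌊2 * X⌋₊ with DvdInfty n₁ N, (n₁ : ℝ) ^ (-σ)
  have : 0 ≤ S := sum_nonneg fun _ _ => by positivity
  have hSN : S ≤ Z * (N : ℝ) ^ ε := hZN N hN _ fun n₁ hn₁ => (mem_filter.mp hn₁).2
  calc ∑ n ∈ Icc 1 ⌊2 * X⌋₊, w n * truncatedRpow m α (n / X - 1)
      ≤ 2 * (2 * (B * S) * X) * (1 - 2 * q)⁻¹ + 4 * (2 * (B * S) * L) * m :=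
        sum_mul_le_of_sum_superlevel_le (fun n _ => hw n)
          (fun n hn => one_le_truncatedRpow hm hα₀.le (abs_div_sub_one_le_one_of_mem hX hn))
          (fun _ _ => truncatedRpow_le) hm (by positivity) (by positivity) hq hq_half fun k =>
            (hRam.sum_superlevel_truncatedRpow_le hL hB hw hα₀ hX m _ k).trans_eq (by ring)
    _ = B * S * (8 * (L * m) + 4 * (1 - 2 * q)⁻¹ * X) := by ring
    _ ≤ B * S * ((4 * (1 - 2 * q)⁻¹ + 8) * (L * m) + (4 * (1 - 2 * q)⁻¹ + 8) * X) := by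
        gcongr <;> linarith
    _ ≤ B * (Z * (N : ℝ) ^ ε)
          * ((4 * (1 - 2 * q)⁻¹ + 8) * (L * m) + (4 * (1 - 2 * q)⁻¹ + 8) * X) := by
        gcongr
    _ = Z * (4 * (1 - 2 * q)⁻¹ + 8) * B * (N : ℝ) ^ ε * (L * m + X) := by ring

end RamanujanOnAverage

lemma ite_eq_truncatedRpow {Q T y : ℝ} (m α x : ℝ) (hQ : Q ≠ 0) (hT : T ≠ 0) (hy : y ≠ 0) :
    (if 2 * Real.pi * x * y / Q = T then m
      else min m (|2 * Real.pi * x * y / (Q * T) - 1| ^ (-α)))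
      = truncatedRpow m α (x / (Q * T / (2 * Real.pi * y)) - 1) := by
  have hu : x / (Q * T / (2 * Real.pi * y)) = 2 * Real.pi * x * y / (Q * T) := by field_simp
  have hzero : 2 * Real.pi * x * y / Q = T ↔ 2 * Real.pi * x * y / (Q * T) - 1 = 0 := by
    rw [sub_eq_zero, ← div_div, div_eq_one_iff_eq hT]
  simp only [truncatedRpow, hu, hzero]

theorem stmt_11_general {ε α σ : ℝ} (hε : 0 < ε) (hα₀ : 0 < α) (hα₁ : α < 1) (hσ : 0 < σ) :
    ∃ C : ℝ, 0 < C ∧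
      ∀ (N L : ℕ) (B m Q T y : ℝ) (w : ℕ → ℝ), N ≠ 0 → L ≠ 0 → 0 ≤ B → 1 ≤ m →
        0 < Q → 0 < T → 0 < y → (∀ n, 0 ≤ w n) → RamanujanOnAverage N L B σ w →
        ∑ n ∈ Icc 1 ⌊Q * T / (Real.pi * y)⌋₊,
            w n * (if 2 * Real.pi * n * y / Q = T then m
              else min m (|2 * Real.pi * n * y / (Q * T) - 1| ^ (-α)))
          ≤ C * B * (N : ℝ) ^ ε * (L * m + Q * T / y) := by
  obtain ⟨C, hC, hbound⟩ :=
    RamanujanOnAverage.exists_sum_mul_truncatedRpow_le hε hα₀ hα₁ hσ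
  refine ⟨C, hC, fun N L B m Q T y w hN hL hB hm hQ hT hy hw hRam => ?_⟩
  have hscale : Q * T / (Real.pi * y) = 2 * (Q * T / (2 * Real.pi * y)) := by field_simp
  simp only [ite_eq_truncatedRpow m α _ hQ.ne' hT.ne' hy.ne', hscale]
  refine (hbound N L B m _ w hN hL hB hm (by positivity) hw hRam).trans ?_
  gcongr
  exact le_mul_of_one_le_left hy.le (by linarith [Real.pi_gt_three])

/-- An averaged bound for weighted Bessel-type sums: if the coefficients `a`
satisfy a Ramanujan-type bound on average along arithmetic progressions, then
`Σ_{n : 2πny/Qᵍ ≤ 2T} a(n)² min(T^{1/3}, |2πny/(QᵍT) − 1|^{−1/2})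
  ≤ C (NT)^ε (N₀ᵍ T^{1/3} + Qᵍ T / y)`. -/
theorem stmt_11 :
    ∀ ε : ℝ, 0 < ε → ∀ B : ℝ, 0 ≤ B →
    ∃ C : ℝ, 0 < C ∧
      ∀ N N₀g Qg : ℕ, 1 ≤ N → 1 ≤ N₀g → 1 ≤ Qg →
      ∀ T y : ℝ, 1 ≤ T → 0 < y →
      ∀ a : ℕ → ℝ, (∀ n, 0 ≤ a n) →
        (∀ n₁ : ℕ, 1 ≤ n₁ → DvdInfty n₁ N → ∀ r : ℕ,
          ∑ n₀ ∈ (Finset.Ico (r * N₀g) ((r + 1) * N₀g)).filter (Nat.Coprime · N),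
              a (n₀ * n₁) ^ 2
            ≤ B * (N₀g : ℝ) * (n₁ : ℝ) ^ (-(1 / 2 : ℝ))) →
        ∑ n ∈ Finset.Icc 1 ⌊Qg * T / (Real.pi * y)⌋₊,
            a n ^ 2 *
              (if 2 * Real.pi * n * y / Qg = T then T ^ ((1 : ℝ) / 3)
               else min (T ^ ((1 : ℝ) / 3))
                 (|2 * Real.pi * n * y / (Qg * T) - 1| ^ (-(1 / 2 : ℝ))))
          ≤ C * ((N : ℝ) * T) ^ ε * ((N₀g : ℝ) * T ^ ((1 : ℝ) / 3) + Qg * T / y) := by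
  intro ε hε B hB
  obtain ⟨C, hC, hbound⟩ := stmt_11_general (α := 1 / 2) (σ := 1 / 2) hε (by norm_num)
    (by norm_num) (by norm_num)
  refine ⟨C * (B + 1), by positivity, fun N N₀g Qg hN hN₀ hQ T y hT hy a _ hRam => ?_⟩
  refine (hbound N N₀g B _ Qg T y (fun n => a n ^ 2) (by lia) (by lia) hB
    (Real.one_le_rpow hT (by norm_num)) (by positivity) (by positivity) hy (fun _ => sq_nonneg _)
    hRam).trans ?_
  gcongr
  · exact le_add_of_nonneg_right zero_le_one
  · exact le_mul_of_one_le_right N.cast_nonneg hT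
end
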